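/- Let ρ be a quasi-periodic labelling and let G_ρ be the associated finitely generated simple left orderable group of homeomorphisms of ℝ. Then G_ρ has vanishing second bounded cohomology with trivial real coefficients: every bounded 2-cocycle ω : G_ρ × G_ρ → ℝ is the coboundary of a bounded function φ : G_ρ → ℝ. -/

import Mathlib

/-! ### Letters, labellings and quasi-periodicity -/

/-- The four letters `a, b, a⁻¹, b⁻¹`. -/
inductive Letter : Type
  | a : Letter
  | b : Letter
  | A : Letter  -- `a⁻¹`
  | B : Letter  -- `b⁻¹`
  deriving DecidableEq

/-- The formal inverse of a letter. -/
def Letter.inv : Letter → Letter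
  | .a => .A
  | .A => .a
  | .b => .B
  | .B => .b

/-- We encode the set of half-integers `½ℤ` by `ℤ` via `m ↦ m / 2`; integer points
correspond to even indices and proper half-integer points to odd indices.
A labelling assigns `a^{±1}` to integer points and `b^{±1}` to half-integer points. -/
def IsLabelling (ρ : ℤ → Letter) : Prop :=
  ∀ m : ℤ, (Even m → ρ m = Letter.a ∨ ρ m = Letter.A) ∧
    (Odd m → ρ m = Letter.b ∨ ρ m = Letter.B)

/-- The word of the labelling `ρ` along the block `{k, k+1, …, k+n}` (in the
half-integer encoding, the block of size `n+1` starting at `k/2`). -/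
def blockWord (ρ : ℤ → Letter) (k : ℤ) (n : ℕ) : List Letter :=
  (List.range (n + 1)).map fun i => ρ (k + i)

/-- The formal inverse of a word: reverse the word and invert each letter. -/
def wordInv (w : List Letter) : List Letter :=
  (w.map Letter.inv).reverse

/-- A labelling is quasi-periodic if (1) every subword of the labelling appears as a
subword (string of consecutive letters) of every sufficiently large block, and (2) the
formal inverse of every subword of the labelling is again a subword of the labelling. -/
def IsQuasiPeriodic (ρ : ℤ → Letter) : Prop :=
  IsLabelling ρ ∧
    (∀ (k : ℤ) (n : ℕ), ∃ N : ℕ, ∀ (k' : ℤ) (n' : ℕ), N ≤ n' + 1 →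
      (blockWord ρ k n) <:+: (blockWord ρ k' n')) ∧
    (∀ (k : ℤ) (n : ℕ), ∃ k' : ℤ, blockWord ρ k' n = wordInv (blockWord ρ k n))

/-! ### Thompson's group `F` and the subgroup `H`

Orientation-preserving homeomorphisms of `[0,1]` are realised as order-automorphisms
of `ℝ` that are the identity outside `[0,1]`; orientation-preserving homeomorphisms of
the line are order-automorphisms of `ℝ`. -/

/-- A dyadic rational real number, i.e. an element of `ℤ[1/2]`. -/
def IsDyadic (x : ℝ) : Prop :=
  ∃ (a : ℤ) (b : ℕ), x = (a : ℝ) / 2 ^ b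

/-- Membership in Thompson's group `F`: the identity outside `[0,1]`, and on `[0,1]`
piecewise linear with breakpoints in `ℤ[1/2]` and slopes integer powers of `2`. -/
def InThompsonF (f : ℝ ≃o ℝ) : Prop :=
  (∀ x : ℝ, x ∉ Set.Icc (0 : ℝ) 1 → f x = x) ∧
    ∃ (m : ℕ) (x : Fin (m + 1) → ℝ), x 0 = 0 ∧ x (Fin.last m) = 1 ∧ StrictMono x ∧
      (∀ i, IsDyadic (x i)) ∧
      ∀ i : Fin m, ∃ (k : ℤ) (c : ℝ),
        ∀ t ∈ Set.Icc (x i.castSucc) (x i.succ), f t = 2 ^ k * t + c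

/-- Membership in the subgroup `H ≤ F` of elements whose slopes at `0` and `1`
coincide. -/
def InH (f : ℝ ≃o ℝ) : Prop :=
  InThompsonF f ∧
    ∃ (k : ℤ) (ε : ℝ), 0 < ε ∧ (∀ t ∈ Set.Icc (0 : ℝ) ε, f t = 2 ^ k * t) ∧
      ∀ t ∈ Set.Icc (1 - ε) (1 : ℝ), f t = 1 + 2 ^ k * (t - 1)

/-! ### The generators of `G_ρ` -/

/-- `ζ` is the homeomorphism of `ℝ` which on each `[n, n+1]` is the conjugate of `ν`
(a homeomorphism of `[0,1]`) by the orientation-preserving isometry `[n,n+1] → [0,1]`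
if `ρ(n + ½) = b`, and by the orientation-reversing isometry if `ρ(n + ½) = b⁻¹`.
(In the encoding of `½ℤ` by `ℤ`, the point `n + ½` has index `2n + 1`.) -/
def IsZeta (ρ : ℤ → Letter) (ν ζ : ℝ ≃o ℝ) : Prop :=
  ∀ n : ℤ, ∀ x ∈ Set.Icc (n : ℝ) (n + 1),
    (ρ (2 * n + 1) = Letter.b → ζ x = n + ν (x - n)) ∧
    (ρ (2 * n + 1) = Letter.B → ζ x = (n + 1) - ν ((n + 1) - x))

/-- `χ` is the homeomorphism of `ℝ` which on each `[n-½, n+½]` is the conjugate of `ν`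
by the orientation-preserving isometry `[n-½, n+½] → [0,1]` if `ρ(n) = a`, and by the
orientation-reversing isometry if `ρ(n) = a⁻¹`. -/
def IsChi (ρ : ℤ → Letter) (ν χ : ℝ ≃o ℝ) : Prop :=
  ∀ n : ℤ, ∀ x ∈ Set.Icc ((n : ℝ) - 1/2) ((n : ℝ) + 1/2),
    (ρ (2 * n) = Letter.a → χ x = ((n : ℝ) - 1/2) + ν (x - ((n : ℝ) - 1/2))) ∧
    (ρ (2 * n) = Letter.A → χ x = ((n : ℝ) + 1/2) - ν (((n : ℝ) + 1/2) - x))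

/-! ### Bounded cohomology in degree two -/

/-- A bounded 2-cocycle on `G` with trivial real coefficients. -/
def IsBounded2Cocycle {G : Type*} [Group G] (ω : G → G → ℝ) : Prop :=
  (∃ C : ℝ, ∀ g h : G, |ω g h| ≤ C) ∧
    ∀ g₁ g₂ g₃ : G, ω g₂ g₃ - ω (g₁ * g₂) g₃ + ω g₁ (g₂ * g₃) - ω g₁ g₂ = 0

/-- `ω` is the coboundary of a bounded real-valued function. -/
def IsCoboundaryOfBounded {G : Type*} [Group G] (ω : G → G → ℝ) : Prop :=
  ∃ φ : G → ℝ, (∃ C : ℝ, ∀ g : G, |φ g| ≤ C) ∧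
    ∀ g h : G, ω g h = φ h - φ (g * h) + φ g

/-- A group is 2-boundedly acyclic if `H²_b(G; ℝ) = 0`, i.e. every bounded 2-cocycle is
the coboundary of a bounded function. -/
def Is2BoundedlyAcyclic (G : Type*) [Group G] : Prop :=
  ∀ ω : G → G → ℝ, IsBounded2Cocycle ω → IsCoboundaryOfBounded ω

/-- A 2-cocycle is homogeneous if it vanishes on powers of a single element. -/
def IsHomogeneous {G : Type*} [Group G] (ω : G → G → ℝ) : Prop :=
  ∀ (g : G) (i j : ℤ), ω (g ^ i) (g ^ j) = 0


/-! ### Part I: abstract bounded cohomology -/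

namespace VSBC

open Filter
open scoped commutatorElement

theorem exists_ulim (u : ℕ → ℝ) (C : ℝ) (h : ∀ n, |u n| ≤ C) :
    ∃ l, |l| ≤ C ∧ Tendsto u (hyperfilter ℕ : Filter ℕ) (nhds l) := by
  have hc : IsCompact (Set.Icc (-C) C) := isCompact_Icc
  have := hc.ultrafilter_le_nhds ((hyperfilter ℕ).map u) (by
    rw [Filter.le_principal_iff]
    change u ⁻¹' _ ∈ (hyperfilter ℕ : Filter ℕ)
    filter_upwards with n
    exact abs_le.mp (h n))
  obtain ⟨l, hl, hle⟩ := this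
  exact ⟨l, abs_le.mpr hl, hle⟩

noncomputable def ulim (u : ℕ → ℝ) : ℝ := by
  classical
  exact if h : ∃ l, Tendsto u (hyperfilter ℕ : Filter ℕ) (nhds l) then h.choose else 0

theorem ulim_eq {u : ℕ → ℝ} {l : ℝ} (h : Tendsto u (hyperfilter ℕ : Filter ℕ) (nhds l)) :
    ulim u = l := by
  have h' : ∃ l, Tendsto u (hyperfilter ℕ : Filter ℕ) (nhds l) := ⟨l, h⟩
  unfold ulim
  rw [dif_pos h']
  exact tendsto_nhds_unique h'.choose_spec h

theorem ulim_tendsto {u : ℕ → ℝ} {C : ℝ} (h : ∀ n, |u n| ≤ C) :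
    Tendsto u (hyperfilter ℕ : Filter ℕ) (nhds (ulim u)) ∧ |ulim u| ≤ C := by
  obtain ⟨l, hl, ht⟩ := exists_ulim u C h
  rw [ulim_eq ht]
  exact ⟨ht, hl⟩

/-- Cesaro averages. -/
noncomputable def avg (u : ℕ → ℝ) (N : ℕ) : ℝ := (∑ k ∈ Finset.range N, u k) / N

theorem avg_bound {u : ℕ → ℝ} {C : ℝ} (h : ∀ n, |u n| ≤ C) (N : ℕ) : |avg u N| ≤ C := by
  have hC : 0 ≤ C := (abs_nonneg _).trans (h 0)
  unfold avg
  rcases Nat.eq_zero_or_pos N with rfl | hN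
  · simpa using hC
  have hN' : (0 : ℝ) < N := by exact_mod_cast hN
  rw [abs_div, abs_of_pos hN', div_le_iff₀ hN']
  calc |∑ k ∈ Finset.range N, u k| ≤ ∑ k ∈ Finset.range N, |u k| := Finset.abs_sum_le_sum_abs _ _
    _ ≤ ∑ k ∈ Finset.range N, C := Finset.sum_le_sum (fun i _ => h i)
    _ = C * N := by simp [mul_comm]

/-- An invariant mean on bounded sequences. -/
noncomputable def mean (u : ℕ → ℝ) : ℝ := ulim (avg u)

theorem mean_bound {u : ℕ → ℝ} {C : ℝ} (h : ∀ n, |u n| ≤ C) : |mean u| ≤ C :=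
  (ulim_tendsto (avg_bound h)).2

theorem mean_tendsto {u : ℕ → ℝ} {C : ℝ} (h : ∀ n, |u n| ≤ C) :
    Tendsto (avg u) (hyperfilter ℕ : Filter ℕ) (nhds (mean u)) :=
  (ulim_tendsto (avg_bound h)).1

theorem hyper_le : (hyperfilter ℕ : Filter ℕ) ≤ atTop := Nat.hyperfilter_le_atTop

theorem mean_shift_one {u : ℕ → ℝ} {C : ℝ} (h : ∀ n, |u n| ≤ C) :
    mean (fun k => u (k + 1)) = mean u := by
  refine ulim_eq ?_
  have h1 := mean_tendsto h
  have h2 : Tendsto (fun N : ℕ => (u N - u 0) / (N : ℝ)) atTop (nhds 0) := by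
    refine squeeze_zero_norm (a := fun N : ℕ => (2 * C) / (N : ℝ)) (fun N => ?_)
      (tendsto_const_div_atTop_nhds_zero_nat _)
    rw [Real.norm_eq_abs, abs_div, Nat.abs_cast]
    refine div_le_div_of_nonneg_right ?_ (Nat.cast_nonneg _)
    have := abs_sub (u N) (u 0)
    linarith [h N, h 0]
  have h3 := h1.add (h2.mono_left hyper_le)
  rw [add_zero] at h3
  refine h3.congr (fun N => ?_)
  unfold avg
  have := Finset.sum_range_succ u N
  rw [Finset.sum_range_succ'] at this
  rw [← add_div]
  congr 1
  linarith

theorem mean_shift {u : ℕ → ℝ} {C : ℝ} (h : ∀ n, |u n| ≤ C) (j : ℕ) :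
    mean (fun k => u (j + k)) = mean u := by
  induction j with
  | zero => simp
  | succ j ih =>
    rw [← ih, ← mean_shift_one (u := fun k => u (j + k)) (C := C) (fun n => h _)]
    congr 1; ext k; congr 1; ring

theorem add_bounded_zero (d : ℕ → ℝ) (hd : ∀ n, d (n + 1) = d n + d 1) (h0 : d 0 = 0)
    (C : ℝ) (hC : ∀ n, |d n| ≤ C) : d 1 = 0 := by
  have h : ∀ n : ℕ, d n = n * d 1 := by
    intro n
    induction n with
    | zero => simp [h0]
    | succ n ih => rw [hd, ih]; push_cast; ring
  by_contra hne
  have hpos : 0 < |d 1| := abs_pos.mpr hne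
  obtain ⟨n, hn⟩ := exists_nat_gt (C / |d 1|)
  rw [div_lt_iff₀ hpos] at hn
  have := hC n
  rw [h n, abs_mul, Nat.abs_cast] at this
  linarith

section coh
variable {G : Type*} [Group G]

/-- Homogeneity along natural powers. -/
def Hom (ω : G → G → ℝ) : Prop := ∀ (g : G) (i j : ℕ), ω (g ^ i) (g ^ j) = 0

theorem exists_homog (ω : G → G → ℝ) (hω : IsBounded2Cocycle ω) :
    ∃ (ψ : G → ℝ) (C : ℝ), (∀ g, |ψ g| ≤ C) ∧
      ∀ (g : G) (i j : ℕ), ω (g ^ i) (g ^ j) = ψ (g ^ j) - ψ (g ^ (i + j)) + ψ (g ^ i) := by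
  obtain ⟨⟨C, hC⟩, hZ⟩ := hω
  let φ : G → ℕ → ℝ := fun g i => mean (fun k => ω (g ^ i) (g ^ k))
  have hφ : ∀ g i j, ω (g ^ i) (g ^ j) = φ g j - φ g (i + j) + φ g i := by
    intro g i j
    have e1 := mean_tendsto (u := fun k => ω (g ^ i) (g ^ (j + k))) (C := C) (fun n => hC _ _)
    rw [mean_shift (u := fun k => ω (g ^ i) (g ^ k)) (C := C) (fun n => hC _ _)] at e1
    have e2 := mean_tendsto (u := fun k => ω (g ^ j) (g ^ k)) (C := C) (fun n => hC _ _)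
    have e3 := mean_tendsto (u := fun k => ω (g ^ (i + j)) (g ^ k)) (C := C) (fun n => hC _ _)
    have e4 := (e2.sub e3).add e1
    have e5 : Tendsto (fun _ : ℕ => ω (g ^ i) (g ^ j)) (hyperfilter ℕ : Filter ℕ)
        (nhds (φ g j - φ g (i + j) + φ g i)) := by
      refine Tendsto.congr' ?_ e4
      filter_upwards [hyper_le (eventually_gt_atTop 0)] with N hN
      have hN' : (N : ℝ) ≠ 0 := by exact_mod_cast (ne_of_gt hN)
      unfold avg
      rw [← sub_div, ← add_div, ← Finset.sum_sub_distrib, ← Finset.sum_add_distrib,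
        div_eq_iff hN']
      have : ∀ k, ω (g ^ j) (g ^ k) - ω (g ^ (i + j)) (g ^ k) + ω (g ^ i) (g ^ (j + k))
          = ω (g ^ i) (g ^ j) := by
        intro k
        have := hZ (g ^ i) (g ^ j) (g ^ k)
        rw [← pow_add, ← pow_add] at this
        linarith
      rw [Finset.sum_congr rfl (fun k _ => this k)]
      simp [mul_comm]
    exact tendsto_nhds_unique tendsto_const_nhds e5
  have hφb : ∀ g i, |φ g i| ≤ C := fun g i => mean_bound (fun n => hC _ _)
  refine ⟨fun g => φ g 1, C, fun g => hφb g 1, ?_⟩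
  have key : ∀ g i, φ (g ^ i) 1 = φ g i := by
    intro g i
    have := add_bounded_zero (fun j => φ g (i * j) - φ (g ^ i) j) ?_ ?_ (2 * C) ?_
    · simp only [mul_one] at this; linarith
    · intro n
      have e1 := hφ g (i * n) (i * 1)
      have e2 := hφ (g ^ i) n 1
      rw [← pow_mul, ← pow_mul] at e2
      rw [mul_add]
      linarith
    · have e1 := hφ g 0 0
      have e2 := hφ (g ^ i) 0 0
      simp only [pow_zero, add_zero, mul_zero] at *
      linarith
    · intro n
      have := abs_sub (φ g (i * n)) (φ (g ^ i) n)
      linarith [hφb g (i * n), hφb (g ^ i) n]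
  intro g i j
  simp only [key]
  exact hφ g i j

variable {ω : G → G → ℝ}

theorem conj_add (hω : IsBounded2Cocycle ω) (b x y : G) :
    (ω b (x * y) - ω (b * (x * y) * b⁻¹) b) = (ω b x - ω (b * x * b⁻¹) b)
      + (ω b y - ω (b * y * b⁻¹) b) - ω x y + ω (b * x * b⁻¹) (b * y * b⁻¹) := by
  have h1 := hω.2 b x y
  have h2 := hω.2 (b * x * b⁻¹) (b * y * b⁻¹) b
  have h3 := hω.2 (b * x * b⁻¹) b y
  have e1 : b * x * b⁻¹ * (b * y * b⁻¹) = b * (x * y) * b⁻¹ := by group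
  have e2 : b * x * b⁻¹ * b = b * x := by group
  have e3 : b * y * b⁻¹ * b = b * y := by group
  rw [e1, e3] at h2
  rw [e2] at h3
  linarith

theorem conj_comm (hω : IsBounded2Cocycle ω) (hh : Hom ω) (b a : G) :
    ω b a = ω (b * a * b⁻¹) b := by
  obtain ⟨C, hC⟩ := hω.1
  have := add_bounded_zero (fun n => ω b (a ^ n) - ω (b * a ^ n * b⁻¹) b) ?_ ?_ (2 * C) ?_
  · simp only [pow_one] at this; linarith
  · intro n
    have h := conj_add hω b (a ^ n) (a ^ 1)
    rw [← pow_add] at h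
    have e1 := hh a n 1
    have e2 := hh (b * a * b⁻¹) n 1
    rw [conj_pow, conj_pow] at e2
    linarith
  · have h := conj_add hω b (a ^ 0) (a ^ 0)
    have e1 := hh a 0 0
    have e2 := hh (b * a * b⁻¹) 0 0
    rw [conj_pow] at e2
    rw [← pow_add] at h
    simp only [add_zero] at h
    linarith
  · intro n
    have := abs_sub (ω b (a ^ n)) (ω (b * a ^ n * b⁻¹) b)
    linarith [hC b (a ^ n), hC (b * a ^ n * b⁻¹) b]

theorem conj_inv (hω : IsBounded2Cocycle ω) (hh : Hom ω) (b x y : G) :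
    ω (b * x * b⁻¹) (b * y * b⁻¹) = ω x y := by
  have h := conj_add hω b x y
  have h1 := conj_comm hω hh b x
  have h2 := conj_comm hω hh b y
  have h3 := conj_comm hω hh b (x * y)
  linarith

theorem swap (hω : IsBounded2Cocycle ω) (hh : Hom ω) (x p y q : G) :
    ω x p + ω y q + ω (x * p) (y * q) =
      ω x (p * y * p⁻¹) + ω p q + ω (x * (p * y * p⁻¹)) (p * q) := by
  have h0 := conj_comm hω hh p y
  have h1 := hω.2 x p (y * q)
  have h2 := hω.2 p y q
  have h3 := hω.2 (p * y * p⁻¹) p q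
  have h4 := hω.2 x (p * y * p⁻¹) (p * q)
  have e1 : p * y * p⁻¹ * p = p * y := by group
  have e2 : p * y * p⁻¹ * (p * q) = p * (y * q) := by group
  rw [e1] at h3
  rw [e2] at h4
  linarith

theorem commute_zero (hω : IsBounded2Cocycle ω) (hh : Hom ω) {f h : G} (hc : Commute f h) :
    ω f h = 0 := by
  obtain ⟨C, hC⟩ := hω.1
  have := add_bounded_zero (fun n => ω (f ^ n) (h ^ n)) ?_ ?_ C (fun n => hC _ _)
  · simpa using this
  · intro n
    have e := swap hω hh (f ^ n) (h ^ n) (f ^ 1) (h ^ 1)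
    have c1 : h ^ n * f ^ 1 * (h ^ n)⁻¹ = f ^ 1 := by
      rw [((hc.symm).pow_pow n 1).eq]; group
    rw [c1, ← pow_add, ← pow_add, ← hc.mul_pow, ← hc.mul_pow, hh, hh, hh] at e
    linarith
  · have := hh f 0 0
    simpa using this

theorem vanish_of_double (hω : IsBounded2Cocycle ω) (hh : Hom ω) (K : Set G)
    (hK : ∀ f ∈ K, ∀ g ∈ K, ∃ t : G,
      Commute f (t * f * t⁻¹) ∧ Commute f (t * g * t⁻¹) ∧ Commute g (t * f * t⁻¹) ∧
      Commute g (t * g * t⁻¹) ∧ f * (t * f * t⁻¹) ∈ K ∧ g * (t * g * t⁻¹) ∈ K) :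
    ∀ f ∈ K, ∀ g ∈ K, ω f g = 0 := by
  obtain ⟨C, hC⟩ := hω.1
  have key : ∀ n : ℕ, ∀ f ∈ K, ∀ g ∈ K, |ω f g| * 2 ^ n ≤ C := by
    intro n
    induction n with
    | zero => intro f _ g _; simpa using hC f g
    | succ n ih =>
      intro f hf g hg
      obtain ⟨t, h1, h2, h3, h4, h5, h6⟩ := hK f hf g hg
      have e := swap hω hh f (t * f * t⁻¹) g (t * g * t⁻¹)
      have c1 : t * f * t⁻¹ * g * (t * f * t⁻¹)⁻¹ = g := by
        rw [h3.symm.eq]; group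
      rw [c1, commute_zero hω hh h1, commute_zero hω hh h4, conj_inv hω hh,
        commute_zero hω hh (Commute.mul_left (h1.mul_right h2) (h3.mul_right h4))] at e
      have := ih _ h5 _ h6
      have e' : ω (f * (t * f * t⁻¹)) (g * (t * g * t⁻¹)) = 2 * ω f g := by linarith
      rw [e', abs_mul, abs_two] at this
      rw [pow_succ]; linarith
  intro f hf g hg
  by_contra hne
  have hpos : 0 < |ω f g| := abs_pos.mpr hne
  obtain ⟨n, hn⟩ := pow_unbounded_of_one_lt (C / |ω f g|) (one_lt_two : (1 : ℝ) < 2)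
  rw [div_lt_iff₀ hpos] at hn
  have := key n f hf g hg
  linarith

/-- Gluing criterion for homogeneous cocycles. -/
theorem glue_homog (hω : IsBounded2Cocycle ω) (hh : Hom ω) (A B : ℕ → Subgroup G)
    (hA : ∀ n, ∀ f ∈ A n, ∀ g ∈ A n, ω f g = 0)
    (hB : ∀ n, ∀ f ∈ B n, ∀ g ∈ B n, ω f g = 0)
    (hdec : ∀ f g : G, ∃ N, ∀ n ≥ N, ∃ a b a' b', a ∈ A n ∧ b ∈ B n ∧ a' ∈ A n ∧ b' ∈ B n ∧
      f = a * b ∧ g = a' * b' ∧ b * a' * b⁻¹ ∈ A n) :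
    IsCoboundaryOfBounded ω := by
  classical
  obtain ⟨C, hC⟩ := hω.1
  let P : ℕ → G → G × G → Prop := fun n f ab => ab.1 ∈ A n ∧ ab.2 ∈ B n ∧ f = ab.1 * ab.2
  let φ : ℕ → G → ℝ := fun n f =>
    if h : ∃ ab, P n f ab then ω h.choose.1 h.choose.2 else 0
  have hφb : ∀ n f, |φ n f| ≤ C := by
    intro n f
    simp only [φ]
    split_ifs
    · exact hC _ _
    · simpa using (abs_nonneg _).trans (hC 1 1)
  have hφ : ∀ n a b, a ∈ A n → b ∈ B n → φ n (a * b) = ω a b := by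
    intro n a b ha hb
    have h : ∃ ab, P n (a * b) ab := ⟨(a, b), ha, hb, rfl⟩
    have e : φ n (a * b) = ω h.choose.1 h.choose.2 := by
      simp only [φ]; rw [dif_pos h]
    rw [e]
    obtain ⟨h1, h2, h3⟩ := h.choose_spec
    set a₁ := h.choose.1
    set b₁ := h.choose.2
    have hk : a⁻¹ * a₁ = b * b₁⁻¹ := by
      rw [inv_mul_eq_iff_eq_mul, ← mul_assoc, eq_mul_inv_iff_mul_eq, h3]
    have hkA : a⁻¹ * a₁ ∈ A n := (A n).mul_mem ((A n).inv_mem ha) h1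
    have hkB : a⁻¹ * a₁ ∈ B n := hk ▸ (B n).mul_mem hb ((B n).inv_mem h2)
    have z := hω.2 a (a⁻¹ * a₁) b₁
    have e1 : a * (a⁻¹ * a₁) = a₁ := by group
    have e2 : a⁻¹ * a₁ * b₁ = b := by rw [hk]; group
    rw [e1, e2, hA n _ ha _ hkA, hB n _ hkB _ h2] at z
    linarith
  refine ⟨fun f => - ulim (fun n => φ n f), ⟨C, fun g => ?_⟩, ?_⟩
  · rw [abs_neg]; exact (ulim_tendsto (fun n => hφb n g)).2
  · intro f g
    obtain ⟨N, hN⟩ := hdec f g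
    have tf := (ulim_tendsto (fun n => hφb n f)).1
    have tg := (ulim_tendsto (fun n => hφb n g)).1
    have tfg := (ulim_tendsto (fun n => hφb n (f * g))).1
    have t := (tfg.sub tf).sub tg
    have t' : Tendsto (fun _ : ℕ => ω f g) (hyperfilter ℕ : Filter ℕ)
        (nhds (ulim (fun n => φ n (f * g)) - ulim (fun n => φ n f) - ulim (fun n => φ n g))) := by
      refine Tendsto.congr' ?_ t
      filter_upwards [hyper_le (eventually_ge_atTop N)] with n hn
      obtain ⟨a, b, a', b', ha, hb, ha', hb', hf, hg, hab⟩ := hN n hn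
      have e : f * g = (a * (b * a' * b⁻¹)) * (b * b') := by rw [hf, hg]; group
      rw [e, hφ n _ _ ((A n).mul_mem ha hab) ((B n).mul_mem hb hb'), hf, hg,
        hφ n _ _ ha hb, hφ n _ _ ha' hb']
      have s := swap hω hh a b a' b'
      rw [hA n _ ha _ hab, hB n _ hb _ hb'] at s
      linarith
    have := tendsto_nhds_unique tendsto_const_nhds t'
    rw [this]; ring

/-- Gluing criterion for arbitrary bounded cocycles: it is enough to find subgroups on which
homogeneous bounded cocycles vanish. -/
theorem glue (A B : ℕ → Subgroup G)
    (hA : ∀ ω : G → G → ℝ, IsBounded2Cocycle ω → Hom ω →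
      ∀ n, ∀ f ∈ A n, ∀ g ∈ A n, ω f g = 0)
    (hB : ∀ ω : G → G → ℝ, IsBounded2Cocycle ω → Hom ω →
      ∀ n, ∀ f ∈ B n, ∀ g ∈ B n, ω f g = 0)
    (hdec : ∀ f g : G, ∃ N, ∀ n ≥ N, ∃ a b a' b', a ∈ A n ∧ b ∈ B n ∧ a' ∈ A n ∧ b' ∈ B n ∧
      f = a * b ∧ g = a' * b' ∧ b * a' * b⁻¹ ∈ A n)
    (ω : G → G → ℝ) (hω : IsBounded2Cocycle ω) : IsCoboundaryOfBounded ω := by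
  obtain ⟨ψ, C, hψ, hhom⟩ := exists_homog ω hω
  let ω' : G → G → ℝ := fun g h => ω g h - (ψ h - ψ (g * h) + ψ g)
  have hω' : IsBounded2Cocycle ω' := by
    obtain ⟨⟨D, hD⟩, hZ⟩ := hω
    refine ⟨⟨D + 3 * C, fun g h => ?_⟩, fun g₁ g₂ g₃ => ?_⟩
    · have a1 := abs_le.mp (hD g h)
      have a2 := abs_le.mp (hψ g)
      have a3 := abs_le.mp (hψ h)
      have a4 := abs_le.mp (hψ (g * h))
      simp only [ω']
      rw [abs_le]; constructor <;> linarith [a1.1, a1.2, a2.1, a2.2, a3.1, a3.2, a4.1, a4.2]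
    · have := hZ g₁ g₂ g₃
      simp only [ω', mul_assoc]
      linarith
  have hh : Hom ω' := by
    intro g i j
    simp only [ω']
    rw [hhom, ← pow_add]; ring
  obtain ⟨φ, ⟨D, hD⟩, hφ⟩ := glue_homog hω' hh A B (hA ω' hω' hh) (hB ω' hω' hh) hdec
  refine ⟨fun g => φ g + ψ g, ⟨D + C, fun g => (abs_add_le _ _).trans
    (add_le_add (hD g) (hψ g))⟩, fun g h => ?_⟩
  have := hφ g h
  simp only [ω'] at this
  linarith

end coh


/-! ### Part II: elements of Thompson's group -/

section thompson

/-- `f` is the identity outside `s`. -/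
def SuppIn (f : ℝ ≃o ℝ) (s : Set ℝ) : Prop := ∀ x, x ∉ s → f x = x

theorem SuppIn.mono {f : ℝ ≃o ℝ} {s t : Set ℝ} (h : SuppIn f s) (hst : s ⊆ t) : SuppIn f t :=
  fun x hx => h x (fun h' => hx (hst h'))

theorem SuppIn.one (s : Set ℝ) : SuppIn 1 s := fun _ _ => rfl

theorem SuppIn.mul {f g : ℝ ≃o ℝ} {s : Set ℝ} (hf : SuppIn f s) (hg : SuppIn g s) :
    SuppIn (f * g) s := fun x hx => by
  rw [RelIso.mul_apply, hg x hx, hf x hx]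

theorem inv_apply_eq {f : ℝ ≃o ℝ} {x y : ℝ} (h : f x = y) : f⁻¹ y = x := by
  rw [← h, RelIso.inv_apply_self]

theorem SuppIn.inv {f : ℝ ≃o ℝ} {s : Set ℝ} (hf : SuppIn f s) : SuppIn f⁻¹ s :=
  fun x hx => inv_apply_eq (hf x hx)

theorem SuppIn.pow {f : ℝ ≃o ℝ} {s : Set ℝ} (hf : SuppIn f s) (n : ℕ) : SuppIn (f ^ n) s := by
  induction n with
  | zero => exact SuppIn.one s
  | succ n ih => rw [pow_succ]; exact ih.mul hf

theorem SuppIn.maps {f : ℝ ≃o ℝ} {s : Set ℝ} (hf : SuppIn f s) {x : ℝ} (hx : x ∈ s) :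
    f x ∈ s := by
  by_contra h
  have h1 := hf _ h
  have h2 : f x = x := f.injective h1
  rw [h2] at h
  exact h hx

theorem SuppIn.conj {f : ℝ ≃o ℝ} {s : Set ℝ} (hf : SuppIn f s) (t : ℝ ≃o ℝ) {s' : Set ℝ}
    (h : ∀ x ∈ s, t x ∈ s') : SuppIn (t * f * t⁻¹) s' := by
  intro x hx
  have h1 : t⁻¹ x ∉ s := fun h' => hx (by
    have := h _ h'
    rwa [RelIso.apply_inv_self] at this)
  rw [RelIso.mul_apply, RelIso.mul_apply, hf _ h1, RelIso.apply_inv_self]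

theorem SuppIn.commute {f g : ℝ ≃o ℝ} {s t : Set ℝ} (hf : SuppIn f s) (hg : SuppIn g t)
    (hst : ∀ x ∈ s, x ∉ t) : Commute f g := by
  apply RelIso.ext
  intro x
  rw [RelIso.mul_apply, RelIso.mul_apply]
  by_cases hx : x ∈ s
  · rw [hg x (hst x hx), hg _ (hst _ (hf.maps hx))]
  · by_cases hx' : x ∈ t
    · rw [hf x hx, hf (g x) (fun h => hst _ h (hg.maps hx'))]
    · rw [hf x hx, hg x hx', hf x hx]

theorem Th_mono : StrictMono (fun x : ℝ => max x (min (2 * x) (min (x + 1/4) (x / 2 + 1/2)))) := by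
  intro a b h
  exact max_lt_max h (min_lt_min (by linarith) (min_lt_min (by linarith) (by linarith)))

theorem Th_val (x : ℝ) : ∃ y, y = max x (min (2 * x) (min (x + 1/4) (x / 2 + 1/2))) ∧
    ((x ≤ 0 ∧ y = x) ∨ (0 ≤ x ∧ x ≤ 1/4 ∧ y = 2 * x) ∨ (1/4 ≤ x ∧ x ≤ 1/2 ∧ y = x + 1/4) ∨
      (1/2 ≤ x ∧ x ≤ 1 ∧ y = x / 2 + 1/2) ∨ (1 ≤ x ∧ y = x)) := by
  refine ⟨_, rfl, ?_⟩
  rcases le_total x 0 with h | h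
  · left; refine ⟨h, max_eq_left (min_le_of_left_le (by linarith))⟩
  rcases le_total x (1/4) with h1 | h1
  · right; left
    refine ⟨h, h1, ?_⟩
    rw [min_eq_left (le_min (by linarith) (by linarith)), max_eq_right (by linarith)]
  rcases le_total x (1/2) with h2 | h2
  · right; right; left
    refine ⟨h1, h2, ?_⟩
    rw [min_eq_left (a := x + 1/4) (by linarith), min_eq_right (by linarith),
      max_eq_right (by linarith)]
  rcases le_total x 1 with h3 | h3
  · right; right; right; left
    refine ⟨h2, h3, ?_⟩
    rw [min_eq_right (a := x + 1/4) (by linarith), min_eq_right (by linarith),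
      max_eq_right (by linarith)]
  · right; right; right; right
    exact ⟨h3, max_eq_left (min_le_of_right_le (min_le_of_right_le (by linarith)))⟩

theorem Th_val_inv (x : ℝ) : ∃ y, y = min x (max (x / 2) (max (x - 1/4) (2 * x - 1))) ∧
    ((x ≤ 0 ∧ y = x) ∨ (0 ≤ x ∧ x ≤ 1/2 ∧ y = x / 2) ∨ (1/2 ≤ x ∧ x ≤ 3/4 ∧ y = x - 1/4) ∨
      (3/4 ≤ x ∧ x ≤ 1 ∧ y = 2 * x - 1) ∨ (1 ≤ x ∧ y = x)) := by
  refine ⟨_, rfl, ?_⟩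
  rcases le_total x 0 with h | h
  · left; refine ⟨h, min_eq_left (le_max_of_le_left (by linarith))⟩
  rcases le_total x (1/2) with h1 | h1
  · right; left
    refine ⟨h, h1, ?_⟩
    rw [max_eq_left (max_le (by linarith) (by linarith)), min_eq_right (by linarith)]
  rcases le_total x (3/4) with h2 | h2
  · right; right; left
    refine ⟨h1, h2, ?_⟩
    rw [max_eq_left (a := x - 1/4) (by linarith), max_eq_right (by linarith),
      min_eq_right (by linarith)]
  rcases le_total x 1 with h3 | h3
  · right; right; right; left
    refine ⟨h2, h3, ?_⟩
    rw [max_eq_right (a := x - 1/4) (by linarith), max_eq_right (by linarith),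
      min_eq_right (by linarith)]
  · right; right; right; right
    exact ⟨h3, min_eq_left (le_max_of_le_right (le_max_of_le_right (by linarith)))⟩

theorem Th_left (x : ℝ) :
    (fun x : ℝ => min x (max (x / 2) (max (x - 1/4) (2 * x - 1))))
      ((fun x : ℝ => max x (min (2 * x) (min (x + 1/4) (x / 2 + 1/2)))) x) = x := by
  obtain ⟨y, hy, h⟩ := Th_val x
  obtain ⟨z, hz, h'⟩ := Th_val_inv y
  simp only
  rw [← hy, ← hz]
  clear hy hz
  rcases h with h | h | h | h | h <;> rcases h' with h' | h' | h' | h' | h' <;>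
    grind

theorem Th_right (x : ℝ) :
    (fun x : ℝ => max x (min (2 * x) (min (x + 1/4) (x / 2 + 1/2))))
      ((fun x : ℝ => min x (max (x / 2) (max (x - 1/4) (2 * x - 1)))) x) = x := by
  obtain ⟨y, hy, h⟩ := Th_val_inv x
  obtain ⟨z, hz, h'⟩ := Th_val y
  simp only
  rw [← hy, ← hz]
  clear hy hz
  rcases h with h | h | h | h | h <;> rcases h' with h' | h' | h' | h' | h' <;>
    grind

/-- The basic bump. -/
noncomputable def Th : ℝ ≃o ℝ where
  toFun x := max x (min (2 * x) (min (x + 1/4) (x / 2 + 1/2)))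
  invFun x := min x (max (x / 2) (max (x - 1/4) (2 * x - 1)))
  left_inv x := Th_left x
  right_inv x := Th_right x
  map_rel_iff' := by
    intro a b
    exact Th_mono.le_iff_le

theorem Th_apply (x : ℝ) : Th x = max x (min (2 * x) (min (x + 1/4) (x / 2 + 1/2))) := rfl

/-- The affine order automorphism `u ↦ p + q u`. -/
noncomputable def aff (p q : ℝ) (hq : 0 < q) : ℝ ≃o ℝ where
  toFun u := p + q * u
  invFun x := (x - p) / q
  left_inv u := by field_simp; ring
  right_inv u := by field_simp; ring
  map_rel_iff' := by
    intro a b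
    simp only [Equiv.coe_fn_mk]
    constructor
    · intro h; exact le_of_mul_le_mul_left (by linarith) hq
    · intro h; have := mul_le_mul_of_nonneg_left h hq.le; linarith

theorem aff_apply (p q : ℝ) (hq : 0 < q) (u : ℝ) : aff p q hq u = p + q * u := rfl
theorem aff_inv_apply (p q : ℝ) (hq : 0 < q) (u : ℝ) : (aff p q hq)⁻¹ u = (u - p) / q := rfl

/-- The bump supported in `(p, p+q)`. -/
noncomputable def th (p q : ℝ) (hq : 0 < q) : ℝ ≃o ℝ := aff p q hq * Th * (aff p q hq)⁻¹

theorem th_apply' (p q : ℝ) (hq : 0 < q) (u : ℝ) :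
    th p q hq u = p + q * Th ((u - p) / q) := rfl

theorem th_apply (p q : ℝ) (hq : 0 < q) (x : ℝ) :
    th p q hq x = max x (min (2 * x - p) (min (x + q/4) (x / 2 + (p + q)/2))) := by
  rw [th_apply', Th_apply, mul_max_of_nonneg _ _ hq.le, mul_min_of_nonneg _ _ hq.le,
    mul_min_of_nonneg _ _ hq.le, ← max_add_add_left, ← min_add_add_left, ← min_add_add_left]
  congr 1
  · field_simp; ring
  · congr 1
    · field_simp; ring
    · congr 1
      · field_simp; ring
      · field_simp; ring

theorem th_low {p q x : ℝ} (hq : 0 < q) (h : x ≤ p) : th p q hq x = x := by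
  rw [th_apply]; simp only [max_def, min_def]; split_ifs <;> linarith
theorem th_high {p q x : ℝ} (hq : 0 < q) (h : p + q ≤ x) : th p q hq x = x := by
  rw [th_apply]; simp only [max_def, min_def]; split_ifs <;> linarith
theorem th_one {p q x : ℝ} (hq : 0 < q) (h : p ≤ x) (h' : x ≤ p + q / 4) :
    th p q hq x = 2 * x - p := by
  rw [th_apply]; simp only [max_def, min_def]; split_ifs <;> linarith
theorem th_two {p q x : ℝ} (hq : 0 < q) (h : p + q / 4 ≤ x) (h' : x ≤ p + q / 2) :
    th p q hq x = x + q / 4 := by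
  rw [th_apply]; simp only [max_def, min_def]; split_ifs <;> linarith
theorem th_three {p q x : ℝ} (hq : 0 < q) (h : p + q / 2 ≤ x) (h' : x ≤ p + q) :
    th p q hq x = x / 2 + (p + q) / 2 := by
  rw [th_apply]; simp only [max_def, min_def]; split_ifs <;> linarith

theorem th_supp {p q : ℝ} (hq : 0 < q) : SuppIn (th p q hq) (Set.Ioo p (p + q)) := by
  intro x hx
  by_cases h : x ≤ p
  · exact th_low hq h
  · refine th_high hq ?_
    by_contra h'
    exact hx ⟨not_le.mp h, not_le.mp h'⟩

theorem th_gt {p q x : ℝ} (hq : 0 < q) (h : p < x) (h' : x < p + q) : x < th p q hq x := by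
  rw [th_apply]; simp only [max_def, min_def]; split_ifs <;> linarith

theorem isDyadic_add {x y : ℝ} (hx : IsDyadic x) (hy : IsDyadic y) : IsDyadic (x + y) := by
  obtain ⟨a, n, rfl⟩ := hx
  obtain ⟨b, m, rfl⟩ := hy
  refine ⟨a * 2 ^ m + b * 2 ^ n, n + m, ?_⟩
  push_cast
  rw [pow_add]
  field_simp

theorem isDyadic_neg {x : ℝ} (hx : IsDyadic x) : IsDyadic (-x) := by
  obtain ⟨a, n, rfl⟩ := hx
  exact ⟨-a, n, by push_cast; ring⟩

theorem isDyadic_half {x : ℝ} (hx : IsDyadic x) : IsDyadic (x / 2) := by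
  obtain ⟨a, n, rfl⟩ := hx
  exact ⟨a, n + 1, by rw [pow_succ]; field_simp⟩

theorem isDyadic_int (a : ℤ) : IsDyadic a := ⟨a, 0, by simp⟩

theorem exists_dyadic {a b : ℝ} (h : a < b) : ∃ d, IsDyadic d ∧ a < d ∧ d < b := by
  obtain ⟨n, hn⟩ := pow_unbounded_of_one_lt (1 / (b - a)) (one_lt_two : (1 : ℝ) < 2)
  have hpos : (0 : ℝ) < 2 ^ n := by positivity
  rw [div_lt_iff₀ (by linarith)] at hn
  refine ⟨((⌊a * 2 ^ n⌋ + 1 : ℤ) : ℝ) / 2 ^ n, ⟨_, n, rfl⟩, ?_, ?_⟩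
  · rw [lt_div_iff₀ hpos]
    push_cast
    exact Int.lt_floor_add_one _
  · rw [div_lt_iff₀ hpos]
    push_cast
    have := Int.floor_le (a * 2 ^ n)
    nlinarith

theorem th_mem {p q : ℝ} (hq : 0 < q) (dp : IsDyadic p) (dq : IsDyadic q) (hp : 0 < p)
    (hpq : p + q < 1) : InH (th p q hq) := by
  have d0 : IsDyadic 0 := by simpa using isDyadic_int 0
  have d1 : IsDyadic 1 := by simpa using isDyadic_int 1
  have d2 : IsDyadic (p + q / 4) := by
    have := isDyadic_add dp (isDyadic_half (isDyadic_half dq))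
    convert this using 2; ring
  refine ⟨⟨?_, 5, ![0, p, p + q / 4, p + q / 2, p + q, 1], rfl, rfl, ?_, ?_, ?_⟩, ?_⟩
  · intro x hx
    apply th_supp
    intro h
    exact hx ⟨by linarith [h.1], by linarith [h.2]⟩
  · rw [Fin.strictMono_iff_lt_succ]
    intro i
    fin_cases i <;> simp <;> linarith
  · intro i
    fin_cases i
    · exact d0
    · exact dp
    · exact d2
    · exact isDyadic_add dp (isDyadic_half dq)
    · exact isDyadic_add dp dq
    · exact d1
  · intro i
    fin_cases i
    · refine ⟨0, 0, fun t ht => ?_⟩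
      have h2 : t ≤ p := ht.2
      rw [th_low hq h2]; simp
    · refine ⟨1, -p, fun t ht => ?_⟩
      have h1 : p ≤ t := ht.1
      have h2 : t ≤ p + q / 4 := ht.2
      rw [th_one hq h1 h2]; simp; ring
    · refine ⟨0, q / 4, fun t ht => ?_⟩
      rw [th_two hq ht.1 ht.2]; simp
    · refine ⟨-1, (p + q) / 2, fun t ht => ?_⟩
      rw [th_three hq ht.1 ht.2]; simp; ring
    · refine ⟨0, 0, fun t ht => ?_⟩
      rw [th_high hq ht.1]; simp
  · refine ⟨0, min p (1 - (p + q)), lt_min hp (by linarith), ?_, ?_⟩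
    · intro t ht
      rw [th_low hq (ht.2.trans (min_le_left _ _))]; simp
    · intro t ht
      rw [th_high hq (by have := min_le_right p (1 - (p + q)); linarith [ht.1])]; simp

/-- An element of `H` with slope `2` at the ends, trivial on the middle. -/
noncomputable def eta : ℝ ≃o ℝ :=
  th 0 (1/4) (by norm_num) * (th (3/4) (1/4) (by norm_num))⁻¹

theorem eta_low {x : ℝ} (hx : x ≤ 3/4) : eta x = th 0 (1/4) (by norm_num) x := by
  unfold eta
  rw [RelIso.mul_apply, inv_apply_eq (th_low _ hx)]

theorem eta_high {x y : ℝ} (hx : 3/4 ≤ x) (h : th (3/4) (1/4) (by norm_num) x = y) :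
    eta y = x := by
  unfold eta
  rw [RelIso.mul_apply, inv_apply_eq h, th_high]
  linarith

theorem eta_mid {x : ℝ} (hx : x ∈ Set.Icc (1/4 : ℝ) (3/4)) : eta x = x := by
  rw [eta_low hx.2, th_high]; linarith [hx.1]

theorem eta_one {x : ℝ} (h0 : 0 ≤ x) (hx : x ≤ 1/16) : eta x = 2 * x := by
  rw [eta_low (by linarith), th_one _ h0 (by linarith)]; ring

theorem eta_last {x : ℝ} (h0 : 15/16 ≤ x) (hx : x ≤ 1) : eta x = 2 * x - 1 := by
  apply eta_high (by linarith)
  rw [th_three _ (by linarith) (by linarith)]; ring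

theorem eta_mem : InH eta := by
  have dd : ∀ (a : ℤ) (b : ℕ) (x : ℝ), x = a / 2 ^ b → IsDyadic x := fun a b x h => ⟨a, b, h⟩
  refine ⟨⟨?_, 7, ![0, 1/16, 1/8, 1/4, 3/4, 7/8, 15/16, 1], rfl, rfl, ?_, ?_, ?_⟩, ?_⟩
  · intro x hx
    by_cases h : x < 0
    · rw [eta_low (by linarith), th_low _ h.le]
    · have h1 : 1 < x := by
        by_contra h'
        exact hx ⟨not_lt.mp h, not_lt.mp h'⟩
      apply eta_high (by linarith)
      rw [th_high]; linarith
  · rw [Fin.strictMono_iff_lt_succ]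
    intro i
    fin_cases i <;> simp <;> norm_num
  · intro i
    fin_cases i
    · exact dd 0 0 _ (by simp)
    · exact dd 1 4 _ (by simp; norm_num)
    · exact dd 1 3 _ (by simp; norm_num)
    · exact dd 1 2 _ (by simp; norm_num)
    · exact dd 3 2 _ (by simp; norm_num)
    · exact dd 7 3 _ (by simp; norm_num)
    · exact dd 15 4 _ (by simp; norm_num)
    · exact dd 1 0 _ (by simp)
  · intro i
    fin_cases i
    · refine ⟨1, 0, fun t ht => ?_⟩
      rw [eta_one ht.1 ht.2]; simp
    · refine ⟨0, 1/16, fun t ht => ?_⟩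
      have h1 : (1/16 : ℝ) ≤ t := ht.1
      have h2 : t ≤ (1/8 : ℝ) := ht.2
      rw [eta_low (by linarith), th_two _ (by linarith) (by linarith)]; simp; ring
    · refine ⟨-1, 1/8, fun t ht => ?_⟩
      have h1 : (1/8 : ℝ) ≤ t := ht.1
      have h2 : t ≤ (1/4 : ℝ) := ht.2
      rw [eta_low (by linarith), th_three _ (by linarith) (by linarith)]; simp; ring
    · refine ⟨0, 0, fun t ht => ?_⟩
      rw [eta_mid ht]; simp
    · refine ⟨-1, 3/8, fun t ht => ?_⟩
      have h1 : (3/4 : ℝ) ≤ t := ht.1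
      have h2 : t ≤ (7/8 : ℝ) := ht.2
      apply eta_high
      · simp; linarith
      · simp
        rw [th_one _ (by linarith) (by linarith)]; ring
    · refine ⟨0, -1/16, fun t ht => ?_⟩
      have h1 : (7/8 : ℝ) ≤ t := ht.1
      have h2 : t ≤ (15/16 : ℝ) := ht.2
      apply eta_high
      · simp; linarith
      · simp
        rw [th_two _ (by linarith) (by linarith)]; ring
    · refine ⟨1, -1, fun t ht => ?_⟩
      rw [eta_last ht.1 ht.2]; simp; ring
  · refine ⟨1, 1/16, by norm_num, ?_, ?_⟩
    · intro t ht
      rw [eta_one ht.1 ht.2]; simp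
    · intro t ht
      rw [eta_last (by linarith [ht.1]) ht.2]; simp; ring

theorem push_up (f : ℝ ≃o ℝ) {p P : ℝ} (hgt : ∀ x, p < x → x < P → x < f x)
    {α γ : ℝ} (hα : p < α) (hγ : γ < P) : ∃ N : ℕ, γ < (f ^ N) α := by
  by_contra hcon
  push Not at hcon
  set l := ⨆ N : ℕ, (f ^ N) α with hl
  have hb : BddAbove (Set.range (fun N : ℕ => (f ^ N) α)) := ⟨γ, by rintro _ ⟨N, rfl⟩; exact hcon N⟩
  have h0 : α ≤ l := le_ciSup hb 0
  have h1 : l ≤ γ := ciSup_le hcon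
  have h2 : l < f l := hgt l (by linarith) (by linarith)
  have h3 : f⁻¹ l < l := by
    have := f⁻¹.strictMono h2
    rwa [RelIso.inv_apply_self] at this
  obtain ⟨N, hN⟩ := exists_lt_of_lt_ciSup h3
  have h4 : l < (f ^ (N + 1)) α := by
    have := f.strictMono hN
    rw [RelIso.apply_inv_self] at this
    rw [pow_succ', RelIso.mul_apply]; exact this
  exact absurd (le_ciSup hb (N + 1)) (not_le.mpr h4)

variable (H : Subgroup (ℝ ≃o ℝ))

/-- Elements of `H` that are trivial near `0` and `1`. -/
def Fc : Subgroup (ℝ ≃o ℝ) where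
  carrier := {ν | ν ∈ H ∧ ∃ ε > 0, SuppIn ν (Set.Icc ε (1 - ε))}
  mul_mem' := by
    rintro a b ⟨ha, ε, hε, h⟩ ⟨hb, ε', hε', h'⟩
    refine ⟨H.mul_mem ha hb, min ε ε', lt_min hε hε', (h.mono ?_).mul (h'.mono ?_)⟩
    · exact Set.Icc_subset_Icc (min_le_left _ _) (by linarith [min_le_left ε ε'])
    · exact Set.Icc_subset_Icc (min_le_right _ _) (by linarith [min_le_right ε ε'])
  one_mem' := ⟨H.one_mem, 1, one_pos, SuppIn.one _⟩
  inv_mem' := by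
    rintro a ⟨ha, ε, hε, h⟩
    exact ⟨H.inv_mem ha, ε, hε, h.inv⟩

variable {H}

theorem Fc_supp {ν : ℝ ≃o ℝ} (h : ν ∈ Fc H) : ∃ ε > 0, ε < 1/2 ∧ SuppIn ν (Set.Icc ε (1 - ε)) := by
  obtain ⟨_, ε, hε, h⟩ := h
  refine ⟨min ε (1/4), lt_min hε (by norm_num), lt_of_le_of_lt (min_le_right _ _) (by norm_num),
    h.mono ?_⟩
  exact Set.Icc_subset_Icc (min_le_left _ _) (by linarith [min_le_left ε (1/4)])

theorem th_mem_Fc (hH : ∀ f : ℝ ≃o ℝ, f ∈ H ↔ InH f) {p q : ℝ} (hq : 0 < q) (dp : IsDyadic p)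
    (dq : IsDyadic q) (hp : 0 < p) (hpq : p + q < 1) : th p q hq ∈ Fc H := by
  refine ⟨(hH _).2 (th_mem hq dp dq hp hpq), min p (1 - (p + q)), lt_min hp (by linarith),
    (th_supp hq).mono ?_⟩
  intro x hx
  exact ⟨(min_le_left _ _).trans hx.1.le, by linarith [min_le_right p (1 - (p + q)), hx.2]⟩

/-- Transitivity of `Fc` on compact subintervals. -/
theorem Fc_trans (hH : ∀ f : ℝ ≃o ℝ, f ∈ H ↔ InH f) {α β γ δ : ℝ} (hα : 0 < α) (hαβ : α ≤ β)
    (hβ : β < 1) (hγ : 0 ≤ γ) (hγδ : γ < δ) (hδ : δ ≤ 1) :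
    ∃ t ∈ Fc H, γ < t α ∧ t β < δ := by
  set γ' := (2 * γ + δ) / 3 with hγ'
  obtain ⟨p, dp, hp0, hp1⟩ := exists_dyadic (lt_min hα (show 0 < γ' by linarith))
  obtain ⟨P, dP, hP0, hP1⟩ := exists_dyadic (max_lt hβ (show γ' < 1 by linarith))
  have a1 := min_le_left α γ'
  have a2 := min_le_right α γ'
  have a3 := le_max_left β γ'
  have a4 := le_max_right β γ'
  have hq1 : 0 < P - p := by linarith
  have m1 := th_mem_Fc hH hq1 dp (isDyadic_add dP (isDyadic_neg dp)) hp0 (by linarith)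
  set f1 := th p (P - p) hq1 with hf1
  obtain ⟨N1, hN1⟩ := push_up f1 (p := p) (P := P)
    (fun x h h' => th_gt hq1 h (by linarith)) (α := (p + γ') / 2) (γ := β) (by linarith)
    (by linarith)
  have s1 : SuppIn (f1 ^ N1)⁻¹ (Set.Ioo p P) := by
    have := (th_supp (p := p) hq1)
    rw [show p + (P - p) = P by ring] at this
    exact (this.pow N1).inv
  set u := (f1 ^ N1)⁻¹ with hu
  have hβ2 : u β < γ' := by
    have := u.strictMono hN1
    rw [hu, RelIso.inv_apply_self] at this
    rw [hu]; linarith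
  have hα2 : p < u α := (s1.maps (x := α) ⟨by linarith, by linarith⟩).1
  obtain ⟨p3, dp3, hp3, hp3'⟩ := exists_dyadic (show 0 < u α by linarith)
  obtain ⟨P2, dP2, hP2, hP2'⟩ := exists_dyadic (show γ' < δ by linarith)
  have hαβ2 : u α ≤ u β := u.monotone hαβ
  have hq2 : 0 < P2 - p3 := by linarith
  have m2 := th_mem_Fc hH hq2 dp3 (isDyadic_add dP2 (isDyadic_neg dp3)) hp3 (by linarith)
  set f2 := th p3 (P2 - p3) hq2 with hf2
  obtain ⟨N2, hN2⟩ := push_up f2 (p := p3) (P := P2)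
    (fun x h h' => th_gt hq2 h (by linarith)) (α := u α) (γ := γ') hp3' hP2
  have s2 : SuppIn (f2 ^ N2) (Set.Ioo p3 P2) := by
    have := (th_supp (p := p3) hq2)
    rw [show p3 + (P2 - p3) = P2 by ring] at this
    exact this.pow N2
  refine ⟨f2 ^ N2 * u, (Fc H).mul_mem ((Fc H).pow_mem m2 _)
    ((Fc H).inv_mem ((Fc H).pow_mem m1 _)), ?_, ?_⟩
  · rw [RelIso.mul_apply]; linarith
  · rw [RelIso.mul_apply]
    have := (s2.maps (x := u β) ⟨by linarith, by linarith⟩).2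
    linarith

theorem Fc_fix_zero {ν : ℝ ≃o ℝ} (h : ν ∈ Fc H) : ν 0 = 0 ∧ ν 1 = 1 := by
  obtain ⟨ε, h0, h1, hs⟩ := Fc_supp h
  exact ⟨hs 0 (fun h => by linarith [h.1]), hs 1 (fun h => by linarith [h.2])⟩

/-- Higman's argument. -/
theorem higman (hH : ∀ f : ℝ ≃o ℝ, f ∈ H ↔ InH f) (N : Subgroup (ℝ ≃o ℝ))
    (hnorm : ∀ t ∈ Fc H, ∀ n ∈ N, t * n * t⁻¹ ∈ N) (ν : ℝ ≃o ℝ) (hν : ν ∈ N) (hνF : ν ∈ Fc H)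
    (hne : ν ≠ 1) : ⁅Fc H, Fc H⁆ ≤ N := by
  have key : ∃ n ∈ N, n ∈ Fc H ∧ ∃ x, x < n x := by
    have : ∃ x, ν x ≠ x := by
      by_contra hcon
      push Not at hcon
      exact hne (RelIso.ext hcon)
    obtain ⟨x, hx⟩ := this
    rcases lt_or_gt_of_ne hx with h | h
    · refine ⟨ν⁻¹, N.inv_mem hν, (Fc H).inv_mem hνF, ν x, ?_⟩
      rwa [RelIso.inv_apply_self]
    · exact ⟨ν, hν, hνF, x, h⟩
  obtain ⟨n, hn, hnF, x, hx⟩ := key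
  have hx01 : 0 ≤ x ∧ n x ≤ 1 := by
    obtain ⟨ε, h0, h1, hs⟩ := Fc_supp hnF
    have hxs : x ∈ Set.Icc ε (1 - ε) := by
      by_contra h
      rw [hs x h] at hx
      exact lt_irrefl _ hx
    have := hs.maps hxs
    exact ⟨by linarith [hxs.1], by linarith [this.2]⟩
  rw [Subgroup.commutator_le]
  intro f hf g hg
  obtain ⟨ε, h0, h1, hs⟩ := Fc_supp hf
  obtain ⟨ε', h0', h1', hs'⟩ := Fc_supp hg
  set e := min ε ε'
  have he : 0 < e := lt_min h0 h0'
  have e1 : e ≤ ε := min_le_left _ _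
  have e2 : e ≤ ε' := min_le_right _ _
  obtain ⟨t, ht, hta, htb⟩ := Fc_trans hH (α := e) (β := 1 - e) he (by linarith) (by linarith)
    hx01.1 hx hx01.2
  have hmaps : ∀ y ∈ Set.Icc e (1 - e), t y ∈ Set.Ioo x (n x) := fun y hy =>
    ⟨lt_of_lt_of_le hta (t.monotone hy.1), lt_of_le_of_lt (t.monotone hy.2) htb⟩
  have sf : SuppIn (t * f * t⁻¹) (Set.Ioo x (n x)) :=
    (hs.mono (Set.Icc_subset_Icc e1 (by linarith))).conj t hmaps
  have sg : SuppIn (t * g * t⁻¹) (Set.Ioo x (n x)) :=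
    (hs'.mono (Set.Icc_subset_Icc e2 (by linarith))).conj t hmaps
  set a := t * f * t⁻¹ with ha
  set b := t * g * t⁻¹ with hb
  have sc : SuppIn (n * a⁻¹ * n⁻¹) (Set.Ioi (n x)) :=
    sf.inv.conj n (fun y hy => n.strictMono hy.1)
  have hc : Commute (n * a⁻¹ * n⁻¹) b := sc.commute sg (fun y hy hy' => by
    have h1 : n x < y := hy
    linarith [hy'.2])
  have hcomm : ⁅a, b⁆ = (a * n * a⁻¹ * n⁻¹) * (b * (a * n * a⁻¹ * n⁻¹)⁻¹ * b⁻¹) := by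
    have e1 : a * n * a⁻¹ * n⁻¹ = a * (n * a⁻¹ * n⁻¹) := by group
    rw [e1]
    set c := n * a⁻¹ * n⁻¹
    have e3 : a * c * (b * (a * c)⁻¹ * b⁻¹) = a * (c * b * c⁻¹) * a⁻¹ * b⁻¹ := by group
    rw [e3, hc.eq, commutatorElement_def]; group
  have haF : a ∈ Fc H := (Fc H).mul_mem ((Fc H).mul_mem ht hf) ((Fc H).inv_mem ht)
  have hbF : b ∈ Fc H := (Fc H).mul_mem ((Fc H).mul_mem ht hg) ((Fc H).inv_mem ht)
  have hk : a * n * a⁻¹ * n⁻¹ ∈ N := N.mul_mem (hnorm a haF n hn) (N.inv_mem hn)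
  have hab : ⁅a, b⁆ ∈ N := by
    rw [hcomm]
    exact N.mul_mem hk (hnorm b hbF _ (N.inv_mem hk))
  have := hnorm t⁻¹ ((Fc H).inv_mem ht) _ hab
  have e4 : t⁻¹ * ⁅a, b⁆ * t⁻¹⁻¹ = ⁅f, g⁆ := by
    rw [ha, hb, commutatorElement_def, commutatorElement_def]; group
  rwa [e4] at this

theorem D_le : ⁅Fc H, Fc H⁆ ≤ Fc H := Subgroup.commutator_le.2 (fun a ha b hb => by
  rw [commutatorElement_def]
  exact (Fc H).mul_mem ((Fc H).mul_mem ((Fc H).mul_mem ha hb) ((Fc H).inv_mem ha))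
    ((Fc H).inv_mem hb))

theorem D_normal {t d : ℝ ≃o ℝ} (ht : t ∈ Fc H) (hd : d ∈ ⁅Fc H, Fc H⁆) :
    t * d * t⁻¹ ∈ ⁅Fc H, Fc H⁆ := by
  have h1 : ⁅t, d⁆ ∈ ⁅Fc H, Fc H⁆ := Subgroup.commutator_mem_commutator ht (D_le hd)
  have : t * d * t⁻¹ = ⁅t, d⁆ * d := by rw [commutatorElement_def]; group
  rw [this]
  exact Subgroup.mul_mem _ h1 hd

/-- Transitivity of the derived subgroup. -/
theorem D_trans (hH : ∀ f : ℝ ≃o ℝ, f ∈ H ↔ InH f) {α β γ δ : ℝ} (hα : 0 < α) (hαβ : α ≤ β)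
    (hβ : β < 1) (hγ : 0 ≤ γ) (hγδ : γ < δ) (hδ : δ ≤ 1) :
    ∃ t ∈ ⁅Fc H, Fc H⁆, γ < t α ∧ t β < δ := by
  obtain ⟨t, ht, h1, h2⟩ := Fc_trans hH hα hαβ hβ hγ hγδ hδ
  obtain ⟨ε, h0, hε1, hs⟩ := Fc_supp ht
  obtain ⟨h, hh, ha, hb⟩ := Fc_trans hH (α := ε) (β := 1 - ε) h0 (by linarith) (by linarith)
    (show 0 ≤ β by linarith) hβ le_rfl
  have sc : SuppIn (h * t⁻¹ * h⁻¹) (Set.Ioi β) :=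
    hs.inv.conj h (fun y hy => lt_of_lt_of_le ha (h.monotone hy.1))
  refine ⟨⁅t, h⁆, Subgroup.commutator_mem_commutator ht hh, ?_, ?_⟩
  · have : ⁅t, h⁆ = t * (h * t⁻¹ * h⁻¹) := by rw [commutatorElement_def]; group
    rw [this, RelIso.mul_apply, sc α (by simpa using hαβ)]; exact h1
  · have : ⁅t, h⁆ = t * (h * t⁻¹ * h⁻¹) := by rw [commutatorElement_def]; group
    rw [this, RelIso.mul_apply, sc β (by simp)]; exact h2

/-- Nontrivial elements of the derived subgroup with small support, not commuting with a given
element that moves something in the given interval. -/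
theorem D_noncommute (hH : ∀ f : ℝ ≃o ℝ, f ∈ H ↔ InH f) {κ : ℝ ≃o ℝ} {x y : ℝ} (hx : 0 ≤ x)
    (hxy : x < y) (hy : y ≤ 1) (hκ : y ≤ κ x) :
    ∃ d ∈ ⁅Fc H, Fc H⁆, SuppIn d (Set.Ioo x y) ∧ ⁅κ, d⁆ ≠ 1 := by
  obtain ⟨d, hd, h1, h2⟩ := D_trans hH (α := 1/4) (β := 1/4) (γ := 1/2) (δ := 1) (by norm_num)
    le_rfl (by norm_num) (by norm_num) (by norm_num) le_rfl
  obtain ⟨ε, h0, hε1, hs⟩ := Fc_supp (D_le hd)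
  obtain ⟨t, ht, ha, hb⟩ := Fc_trans hH (α := ε) (β := 1 - ε) h0 (by linarith) (by linarith)
    hx hxy hy
  have sd : SuppIn (t * d * t⁻¹) (Set.Ioo x y) := hs.conj t (fun z hz =>
    ⟨lt_of_lt_of_le ha (t.monotone hz.1), lt_of_le_of_lt (t.monotone hz.2) hb⟩)
  refine ⟨t * d * t⁻¹, D_normal ht hd, sd, ?_⟩
  intro hcon
  rw [commutatorElement_eq_one_iff_mul_comm] at hcon
  have s2 : SuppIn (κ * (t * d * t⁻¹) * κ⁻¹) (Set.Ioi y) := sd.conj κ (fun z hz =>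
    lt_of_le_of_lt hκ (κ.strictMono hz.1))
  rw [hcon, mul_inv_cancel_right] at s2
  have hm : (t * d * t⁻¹) (t (1/4)) = t (d (1/4)) := by
    rw [RelIso.mul_apply, RelIso.mul_apply, RelIso.inv_apply_self]
  have hne : t (d (1/4)) ≠ t (1/4) := fun h => by
    have := t.injective h
    linarith
  have hin : t (1/4) ∈ Set.Ioo x y := by
    by_contra h
    exact hne (hm ▸ sd _ h)
  exact hne (hm ▸ s2 _ (fun h => by
    have h1 : y < t (1/4) := h
    linarith [hin.2]))

end thompson


/-! ### Part III: good sets of units -/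

section good

/-- The chart of the unit centred at `m / 2`. -/
noncomputable def ech (o : ℤ → ℤ) (m : ℤ) (u : ℝ) : ℝ := m / 2 + o m * (u - 1 / 2)

/-- `ν` preserves `s`. -/
def Pres (ν : ℝ ≃o ℝ) (s : Set ℝ) : Prop := ∀ u ∈ s, ν u ∈ s ∧ ν⁻¹ u ∈ s

theorem Pres.one (s : Set ℝ) : Pres 1 s := fun _ hu => ⟨hu, hu⟩

theorem Pres.inv {ν : ℝ ≃o ℝ} {s : Set ℝ} (h : Pres ν s) : Pres ν⁻¹ s := fun u hu =>
  ⟨(h u hu).2, by rw [inv_inv]; exact (h u hu).1⟩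

theorem Pres.mul {ν μ : ℝ ≃o ℝ} {s : Set ℝ} (h : Pres ν s) (h' : Pres μ s) : Pres (ν * μ) s :=
  fun u hu => ⟨(h _ (h' u hu).1).1, by rw [mul_inv_rev]; exact (h' _ (h u hu).2).2⟩

theorem SuppIn.pres {ν : ℝ ≃o ℝ} {s t : Set ℝ} (h : SuppIn ν s) (hst : s ⊆ t) : Pres ν t :=
  fun _ hu => ⟨(h.mono hst).maps hu, (h.mono hst).inv.maps hu⟩

theorem pres_Icc {ν : ℝ ≃o ℝ} {a b : ℝ} (ha : ν a = a) (hb : ν b = b) :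
    Pres ν (Set.Icc a b) := by
  intro u hu
  have h1 := ν.monotone hu.1
  have h2 := ν.monotone hu.2
  have h3 := ν⁻¹.monotone hu.1
  have h4 := ν⁻¹.monotone hu.2
  rw [inv_apply_eq ha] at h3
  rw [inv_apply_eq hb] at h4
  rw [ha] at h1
  rw [hb] at h2
  exact ⟨⟨h1, h2⟩, ⟨h3, h4⟩⟩

/-- `f` acts on the part `s` of the unit `m` as `ν`. -/
def LocOn (o : ℤ → ℤ) (m : ℤ) (s : Set ℝ) (ν f : ℝ ≃o ℝ) : Prop :=
  ∀ u ∈ s, f (ech o m u) = ech o m (ν u)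

variable {o : ℤ → ℤ} {m : ℤ} {s : Set ℝ} {ν μ f g : ℝ ≃o ℝ}

theorem LocOn.one : LocOn o m s 1 1 := fun _ _ => rfl

theorem LocOn.mul (hf : LocOn o m s ν f) (hg : LocOn o m s μ g) (hμ : Pres μ s) :
    LocOn o m s (ν * μ) (f * g) := fun u hu => by
  rw [RelIso.mul_apply, RelIso.mul_apply, hg u hu, hf _ (hμ u hu).1]

theorem LocOn.inv (hf : LocOn o m s ν f) (hν : Pres ν s) : LocOn o m s ν⁻¹ f⁻¹ := fun u hu => by
  apply inv_apply_eq
  rw [hf _ (hν u hu).2, RelIso.apply_inv_self]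

theorem LocOn.comm (hf : LocOn o m s ν f) (hg : LocOn o m s μ g) (hν : Pres ν s) (hμ : Pres μ s) :
    LocOn o m s ⁅ν, μ⁆ ⁅f, g⁆ := by
  rw [commutatorElement_def, commutatorElement_def]
  exact ((hf.mul hg hμ).mul (hf.inv hν) hν.inv).mul (hg.inv hμ) hμ.inv

/-- `f` acts as `ν` on all the units of `S` having the parity of `p`, and trivially on the other
units of this parity. -/
def IsLam (o : ℤ → ℤ) (p : ℤ) (S : Set ℤ) (ν f : ℝ ≃o ℝ) : Prop :=
  ∀ m, Even (m - p) → (m ∈ S → LocOn o m (Set.Icc 0 1) ν f) ∧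
    (m ∉ S → LocOn o m (Set.Icc 0 1) 1 f)

variable {p : ℤ} {S T : Set ℤ}

theorem IsLam.mul (hf : IsLam o p S ν f) (hg : IsLam o p S μ g) (hμ : Pres μ (Set.Icc 0 1)) :
    IsLam o p S (ν * μ) (f * g) := fun m hm =>
  ⟨fun h => ((hf m hm).1 h).mul ((hg m hm).1 h) hμ,
    fun h => by simpa using ((hf m hm).2 h).mul ((hg m hm).2 h) (Pres.one _)⟩

theorem IsLam.inv (hf : IsLam o p S ν f) (hν : Pres ν (Set.Icc 0 1)) :
    IsLam o p S ν⁻¹ f⁻¹ := fun m hm =>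
  ⟨fun h => ((hf m hm).1 h).inv hν,
    fun h => by simpa using ((hf m hm).2 h).inv (Pres.one _)⟩

theorem IsLam.one : IsLam o p S 1 1 := fun _ _ => ⟨fun _ => LocOn.one, fun _ => LocOn.one⟩

theorem IsLam.comm (hf : IsLam o p S ν f) (hg : IsLam o p T μ g) (hν : Pres ν (Set.Icc 0 1))
    (hμ : Pres μ (Set.Icc 0 1)) : IsLam o p (S ∩ T) ⁅ν, μ⁆ ⁅f, g⁆ := by
  intro m hm
  refine ⟨fun h => ((hf m hm).1 h.1).comm ((hg m hm).1 h.2) hν hμ, fun h => ?_⟩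
  by_cases hS : m ∈ S
  · have hT : m ∉ T := fun h' => h ⟨hS, h'⟩
    simpa using ((hf m hm).1 hS).comm ((hg m hm).2 hT) hν (Pres.one _)
  · by_cases hT : m ∈ T
    · simpa using ((hf m hm).2 hS).comm ((hg m hm).1 hT) (Pres.one _) hμ
    · simpa using ((hf m hm).2 hS).comm ((hg m hm).2 hT) (Pres.one _) (Pres.one _)

theorem IsLam.conj {t F : ℝ ≃o ℝ} (hF : IsLam o p Set.univ t F) (hf : IsLam o p S ν f)
    (ht : Pres t (Set.Icc 0 1)) (hν : Pres ν (Set.Icc 0 1)) :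
    IsLam o p S (t * ν * t⁻¹) (F * f * F⁻¹) := by
  intro m hm
  have h1 := (hF m hm).1 (Set.mem_univ _)
  refine ⟨fun h => (h1.mul ((hf m hm).1 h) hν).mul (h1.inv ht) ht.inv, fun h => ?_⟩
  simpa using (h1.mul ((hf m hm).2 h) (Pres.one _)).mul (h1.inv ht) ht.inv

theorem IsLam.compl {F : ℝ ≃o ℝ} (hF : IsLam o p Set.univ ν F) (hf : IsLam o p S ν f)
    (hν : Pres ν (Set.Icc 0 1)) : IsLam o p Sᶜ ν (F * f⁻¹) := by
  intro m hm
  have h1 := (hF m hm).1 (Set.mem_univ _)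
  refine ⟨fun h => ?_, fun h => ?_⟩
  · simpa using h1.mul (((hf m hm).2 h).inv (Pres.one _)) (Pres.one _)
  · simpa using h1.mul (((hf m hm).1 (not_not.mp h)).inv hν) hν.inv

variable {G H : Subgroup (ℝ ≃o ℝ)}

theorem Fc_pres (h : ν ∈ Fc H) : Pres ν (Set.Icc 0 1) :=
  pres_Icc (Fc_fix_zero h).1 (Fc_fix_zero h).2

/-- The working hypotheses. -/
structure Ctx (o : ℤ → ℤ) (G H : Subgroup (ℝ ≃o ℝ)) : Prop where
  hH : ∀ f : ℝ ≃o ℝ, f ∈ H ↔ InH f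
  ho : ∀ m, o m = 1 ∨ o m = -1
  lam : ∀ (p : ℤ), ∀ ν ∈ H, ∃ f ∈ G, IsLam o p Set.univ ν f

/-- Elements realised on `S`. -/
def Q (o : ℤ → ℤ) (G H : Subgroup (ℝ ≃o ℝ)) (p : ℤ) (S : Set ℤ) : Subgroup (ℝ ≃o ℝ) where
  carrier := {ν | ν ∈ Fc H ∧ ∃ f ∈ G, IsLam o p S ν f}
  mul_mem' := by
    rintro a b ⟨ha, f, hf, h⟩ ⟨hb, g, hg, h'⟩
    exact ⟨(Fc H).mul_mem ha hb, f * g, G.mul_mem hf hg, h.mul h' (Fc_pres hb)⟩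
  one_mem' := ⟨(Fc H).one_mem, 1, G.one_mem, IsLam.one⟩
  inv_mem' := by
    rintro a ⟨ha, f, hf, h⟩
    exact ⟨(Fc H).inv_mem ha, f⁻¹, G.inv_mem hf, h.inv (Fc_pres ha)⟩

/-- Good sets. -/
def Good (o : ℤ → ℤ) (G H : Subgroup (ℝ ≃o ℝ)) (S : Set ℤ) : Prop :=
  ∀ p : ℤ, ∀ ν ∈ ⁅Fc H, Fc H⁆, ∃ f ∈ G, IsLam o p S ν f

theorem Q_higman (c : Ctx o G H) (hν : ν ∈ Q o G H p S) (hne : ν ≠ 1) :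
    ∀ ν ∈ ⁅Fc H, Fc H⁆, ∃ f ∈ G, IsLam o p S ν f := by
  intro d hd
  have := higman c.hH (Q o G H p S) (by
    rintro t ht n ⟨hn, f, hf, h⟩
    obtain ⟨F, hF, hF'⟩ := c.lam p t ht.1
    exact ⟨(Fc H).mul_mem ((Fc H).mul_mem ht hn) ((Fc H).inv_mem ht), F * f * F⁻¹,
      G.mul_mem (G.mul_mem hF hf) (G.inv_mem hF), hF'.conj h (Fc_pres ht) (Fc_pres hn)⟩) ν hν hν.1
      hne hd
  exact this.2

theorem good_univ (c : Ctx o G H) : Good o G H Set.univ := fun p ν hν => c.lam p ν (D_le hν).1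

theorem good_compl (c : Ctx o G H) (h : Good o G H S) : Good o G H Sᶜ := by
  intro p ν hν
  obtain ⟨F, hF, hF'⟩ := c.lam p ν (D_le hν).1
  obtain ⟨f, hf, hf'⟩ := h p ν hν
  exact ⟨F * f⁻¹, G.mul_mem hF (G.inv_mem hf), hF'.compl hf' (Fc_pres (D_le hν))⟩

/-- A nontrivial element of the derived group does not centralise it. -/
theorem D_noncomm {κ : ℝ ≃o ℝ} (hH : ∀ f : ℝ ≃o ℝ, f ∈ H ↔ InH f) {a b : ℝ} (ha : 0 ≤ a)
    (hb : b ≤ 1) (hκ : SuppIn κ (Set.Icc a b)) (hne : κ ≠ 1) :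
    ∃ d ∈ ⁅Fc H, Fc H⁆, SuppIn d (Set.Icc a b) ∧ ⁅κ, d⁆ ≠ 1 := by
  have key : ∀ κ : ℝ ≃o ℝ, SuppIn κ (Set.Icc a b) → ∀ x, x < κ x →
      ∃ d ∈ ⁅Fc H, Fc H⁆, SuppIn d (Set.Icc a b) ∧ ⁅κ, d⁆ ≠ 1 := by
    intro κ hκ x hx
    have hxs : x ∈ Set.Icc a b := by
      by_contra h
      rw [hκ x h] at hx
      exact lt_irrefl _ hx
    have h2 := hκ.maps hxs
    obtain ⟨d, hd, hs, hn⟩ := D_noncommute hH (κ := κ) (x := x) (y := κ x) (by linarith [hxs.1]) hx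
      (by linarith [h2.2]) le_rfl
    exact ⟨d, hd, hs.mono (fun z hz => ⟨by linarith [hxs.1, hz.1], by linarith [h2.2, hz.2]⟩), hn⟩
  have : ∃ x, κ x ≠ x := by
    by_contra hcon
    push Not at hcon
    exact hne (RelIso.ext hcon)
  obtain ⟨x, hx⟩ := this
  rcases lt_or_gt_of_ne hx with h | h
  · obtain ⟨d, hd, hs, hn⟩ := key κ⁻¹ hκ.inv (κ x) (by rwa [RelIso.inv_apply_self])
    refine ⟨d, hd, hs, fun h' => hn ?_⟩
    rw [commutatorElement_eq_one_iff_commute] at h' ⊢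
    exact h'.inv_left
  · exact key κ hκ x h

theorem exists_D_ne (hH : ∀ f : ℝ ≃o ℝ, f ∈ H ↔ InH f) : ∃ d ∈ ⁅Fc H, Fc H⁆, d ≠ 1 := by
  obtain ⟨d, hd, h1, h2⟩ := D_trans hH (α := 1/4) (β := 1/4) (γ := 1/2) (δ := 1) (by norm_num)
    le_rfl (by norm_num) (by norm_num) (by norm_num) le_rfl
  refine ⟨d, hd, ?_⟩
  rintro rfl
  norm_num at h1

theorem good_inter (c : Ctx o G H) (h : Good o G H S) (h' : Good o G H T) :
    Good o G H (S ∩ T) := by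
  intro p
  obtain ⟨κ, hκ, hne⟩ := exists_D_ne c.hH
  obtain ⟨ε, h0, hε1, hs⟩ := Fc_supp (D_le hκ)
  obtain ⟨d, hd, -, hn⟩ := D_noncomm c.hH h0.le (by linarith) hs hne
  obtain ⟨f, hf, hf'⟩ := h p κ hκ
  obtain ⟨g, hg, hg'⟩ := h' p d hd
  refine Q_higman c (ν := ⁅κ, d⁆) ⟨D_le (Subgroup.commutator_mem_commutator (D_le hκ) (D_le hd)),
    ⁅f, g⁆, ?_, hf'.comm hg' (Fc_pres (D_le hκ)) (Fc_pres (D_le hd))⟩ hn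
  rw [commutatorElement_def]
  exact G.mul_mem (G.mul_mem (G.mul_mem hf hg) (G.inv_mem hf)) (G.inv_mem hg)

theorem good_union (c : Ctx o G H) (h : Good o G H S) (h' : Good o G H T) :
    Good o G H (S ∪ T) := by
  have := good_compl c (good_inter c (good_compl c h) (good_compl c h'))
  rwa [Set.compl_inter, compl_compl, compl_compl] at this

theorem good_even (c : Ctx o G H) : Good o G H {m | Even m} := by
  intro p ν hν
  rcases Int.even_or_odd p with hp | hp
  · obtain ⟨f, hf, h⟩ := c.lam p ν (D_le hν).1
    refine ⟨f, hf, fun m hm => ⟨fun _ => (h m hm).1 (Set.mem_univ _), fun h' => ?_⟩⟩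
    exact absurd ((Int.even_sub.1 hm).2 hp) h'
  · refine ⟨1, G.one_mem, fun m hm => ⟨fun h' => ?_, fun _ => LocOn.one⟩⟩
    exact absurd ((Int.even_sub.1 hm).1 h') (Int.not_even_iff_odd.2 hp)

/-! #### The neighbour lemma -/

theorem th_shift {p q : ℝ} (hq : 0 < q) (c u : ℝ) : th (p + c) q hq (u + c) = th p q hq u + c := by
  rw [th_apply, th_apply, ← max_add_add_right, ← min_add_add_right, ← min_add_add_right]
  congr 2
  · ring
  · congr 1 <;> ring

theorem th_flip {p q : ℝ} (hq : 0 < q) (c u : ℝ) :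
    th (c - p - q) q hq (c - th p q hq u) = c - u := by
  rcases le_total u p with h | h
  · rw [th_low hq h, th_high hq (by linarith)]
  rcases le_total u (p + q / 4) with h1 | h1
  · rw [th_one hq h h1, th_three hq (by linarith) (by linarith)]; ring
  rcases le_total u (p + q / 2) with h2 | h2
  · rw [th_two hq h1 h2, th_two hq (by linarith) (by linarith)]; ring
  rcases le_total u (p + q) with h3 | h3
  · rw [th_three hq h2 h3, th_one hq (by linarith) (by linarith)]; ring
  · rw [th_high hq h3, th_low hq (by linarith)]

/-- `τ` intertwines `κ` and `ν`. -/
def Intw (τ : ℝ → ℝ) (κ ν : ℝ ≃o ℝ) : Prop := ∀ u, ν (τ u) = τ (κ u)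

theorem Intw.mul {τ : ℝ → ℝ} {κ ν κ' ν' : ℝ ≃o ℝ} (h : Intw τ κ ν) (h' : Intw τ κ' ν') :
    Intw τ (κ * κ') (ν * ν') := fun u => by
  rw [RelIso.mul_apply, RelIso.mul_apply, h', h]

theorem Intw.inv {τ : ℝ → ℝ} {κ ν : ℝ ≃o ℝ} (h : Intw τ κ ν) : Intw τ κ⁻¹ ν⁻¹ := fun u => by
  apply inv_apply_eq
  rw [h, RelIso.apply_inv_self]

theorem Intw.comm {τ : ℝ → ℝ} {κ ν κ' ν' : ℝ ≃o ℝ} (h : Intw τ κ ν) (h' : Intw τ κ' ν') :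
    Intw τ ⁅κ, κ'⁆ ⁅ν, ν'⁆ := by
  rw [commutatorElement_def, commutatorElement_def]
  exact ((h.mul h').mul h.inv).mul h'.inv

/-- The interwined bumps. -/
theorem exists_bump (hH : ∀ f : ℝ ≃o ℝ, f ∈ H ↔ InH f) {ε δ : ℤ} (hε : ε = 1 ∨ ε = -1)
    (hδ : δ = 1 ∨ δ = -1) {p q : ℝ} (hq : 0 < q) (dp : IsDyadic p) (dq : IsDyadic q)
    (h1 : 1/2 + (ε : ℝ)/4 - 1/4 < p) (h2 : p + q < 1/2 + (ε : ℝ)/4 + 1/4) :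
    th p q hq ∈ Fc H ∧ ∃ ν ∈ Fc H, Intw (fun u => 1/2 + (δ : ℝ) * (u - 1/2 - ε / 2))
      (th p q hq) ν := by
  have dh : IsDyadic (ε / 2) := isDyadic_half (isDyadic_int ε)
  have d1 : IsDyadic 1 := by simpa using isDyadic_int 1
  have he : (ε : ℝ) = 1 ∨ (ε : ℝ) = -1 := by rcases hε with rfl | rfl <;> simp
  refine ⟨th_mem_Fc hH hq dp dq ?_ ?_, ?_⟩
  · rcases he with he | he <;> rw [he] at h1 <;> linarith
  · rcases he with he | he <;> rw [he] at h2 <;> linarith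
  rcases hδ with rfl | rfl
  · refine ⟨th (p + -((ε : ℝ) / 2)) q hq, th_mem_Fc hH hq (isDyadic_add dp (isDyadic_neg dh)) dq
      ?_ ?_, ?_⟩
    · rcases he with he | he <;> rw [he] at h1 ⊢ <;> linarith
    · rcases he with he | he <;> rw [he] at h2 ⊢ <;> linarith
    · intro u
      have := th_shift hq (p := p) (-((ε : ℝ) / 2)) u
      have e1 : 1/2 + ((1 : ℤ) : ℝ) * (u - 1/2 - ε / 2) = u + -((ε : ℝ) / 2) := by push_cast; ring
      simp only
      rw [e1, this]
      push_cast
      ring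
  · refine ⟨(th (1 + (ε : ℝ) / 2 - p - q) q hq)⁻¹, (Fc H).inv_mem (th_mem_Fc hH hq ?_ dq ?_ ?_), ?_⟩
    · exact isDyadic_add (isDyadic_add (isDyadic_add d1 dh) (isDyadic_neg dp)) (isDyadic_neg dq)
    · rcases he with he | he <;> rw [he] at h1 h2 ⊢ <;> linarith
    · rcases he with he | he <;> rw [he] at h1 h2 ⊢ <;> linarith
    · intro u
      apply inv_apply_eq
      have := th_flip hq (p := p) (1 + (ε : ℝ) / 2) u
      have e1 : ∀ v : ℝ, 1/2 + ((-1 : ℤ) : ℝ) * (v - 1/2 - ε / 2) = 1 + (ε : ℝ) / 2 - v := by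
        intro v; push_cast; ring
      simp only
      rw [e1, e1, this]

theorem th_not_comm (p : ℝ) (h : (0 : ℝ) < 1/4) (h' : (0 : ℝ) < 1/16) :
    th p (1/4) h * th (p + 1/16) (1/16) h' ≠ th (p + 1/16) (1/16) h' * th p (1/4) h := by
  intro hcon
  have h1 := congrArg (fun f : ℝ ≃o ℝ => f (p + 1/16 + 1/32)) hcon
  simp only [RelIso.mul_apply] at h1
  have h2 : th p (1/4) h (p + 1/16 + 1/32) = p + 1/16 + 1/32 + 1/4/4 :=
    th_two h (by linarith) (by linarith)
  have h3 : th (p + 1/16) (1/16) h' (p + 1/16 + 1/32 + 1/4/4) = p + 1/16 + 1/32 + 1/4/4 :=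
    th_high h' (by linarith)
  have h4 := th_gt (p := p + 1/16) (x := p + 1/16 + 1/32) h' (by linarith) (by linarith)
  have h5 := (th p (1/4) h).strictMono h4
  rw [h1, h2, h3] at h5
  exact lt_irrefl _ h5

theorem exists_pair (hH : ∀ f : ℝ ≃o ℝ, f ∈ H ↔ InH f) {ε δ : ℤ} (hε : ε = 1 ∨ ε = -1)
    (hδ : δ = 1 ∨ δ = -1) : ∃ κ ∈ ⁅Fc H, Fc H⁆, ∃ ν ∈ ⁅Fc H, Fc H⁆, κ ≠ 1 ∧
      SuppIn κ (Set.Icc (1/2 + (ε : ℝ)/4 - 1/4) (1/2 + (ε : ℝ)/4 + 1/4)) ∧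
      Intw (fun u => 1/2 + (δ : ℝ) * (u - 1/2 - ε / 2)) κ ν := by
  have dp : IsDyadic (3/8 + (ε : ℝ) / 4) := ⟨3 + 2 * ε, 3, by push_cast; ring⟩
  have dp' : IsDyadic (3/8 + (ε : ℝ) / 4 + 1/16) := ⟨7 + 4 * ε, 4, by push_cast; ring⟩
  obtain ⟨m1, ν1, n1, i1⟩ := exists_bump hH hε hδ (show (0 : ℝ) < 1/4 by norm_num) dp
    ⟨1, 2, by norm_num⟩ (by linarith) (by linarith)
  obtain ⟨m2, ν2, n2, i2⟩ := exists_bump hH hε hδ (show (0 : ℝ) < 1/16 by norm_num) dp'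
    ⟨1, 4, by norm_num⟩ (by linarith) (by linarith)
  refine ⟨_, Subgroup.commutator_mem_commutator m1 m2, _,
    Subgroup.commutator_mem_commutator n1 n2, ?_, ?_, i1.comm i2⟩
  · intro hcon
    rw [commutatorElement_eq_one_iff_mul_comm] at hcon
    exact th_not_comm _ _ _ hcon
  · have s1 : SuppIn (th (3/8 + (ε : ℝ) / 4) (1/4) (by norm_num))
        (Set.Icc (1/2 + (ε : ℝ)/4 - 1/4) (1/2 + (ε : ℝ)/4 + 1/4)) :=
      (th_supp _).mono (fun z hz => ⟨by linarith [hz.1], by linarith [hz.2]⟩)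
    have s2 : SuppIn (th (3/8 + (ε : ℝ) / 4 + 1/16) (1/16) (by norm_num))
        (Set.Icc (1/2 + (ε : ℝ)/4 - 1/4) (1/2 + (ε : ℝ)/4 + 1/4)) :=
      (th_supp _).mono (fun z hz => ⟨by linarith [hz.1], by linarith [hz.2]⟩)
    rw [commutatorElement_def]
    exact ((s1.mul s2).mul s1.inv).mul s2.inv

/-- Units whose `ε`-neighbour lies in `S` and has relative orientation `δ`. -/
def nb (o : ℤ → ℤ) (S : Set ℤ) (ε δ : ℤ) : Set ℤ :=
  {m | m + ε * o m ∈ S ∧ o (m + ε * o m) = δ * o m}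

theorem SuppIn.ioo {a b : ℝ} (h : SuppIn f (Set.Icc a b)) : SuppIn f (Set.Ioo a b) := by
  intro x hx
  by_cases hx' : x ∈ Set.Icc a b
  · have h1 := h.maps hx'
    have h2 := h.inv.maps hx'
    rcases eq_or_lt_of_le hx'.1 with rfl | h3
    · refine le_antisymm ?_ h1.1
      have := f.monotone h2.1
      rwa [RelIso.apply_inv_self] at this
    · rcases eq_or_lt_of_le hx'.2 with rfl | h4
      · refine le_antisymm h1.2 ?_
        have := f.monotone h2.2
        rwa [RelIso.apply_inv_self] at this
      · exact absurd ⟨h3, h4⟩ hx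
  · exact h x hx'

theorem o_sq (ho : ∀ m, o m = 1 ∨ o m = -1) (m : ℤ) : ((o m : ℤ) : ℝ) = 1 ∨ ((o m : ℤ) : ℝ) = -1 := by
  rcases ho m with h | h <;> simp [h]

theorem ech_pres (ho : ∀ m, o m = 1 ∨ o m = -1) {F : ℝ ≃o ℝ} {a b : ℝ} (ha : F (ech o m a) = ech o m a)
    (hb : F (ech o m b) = ech o m b) {u : ℝ} (hu : u ∈ Set.Icc a b) :
    ∃ v ∈ Set.Icc a b, F (ech o m u) = ech o m v := by
  refine ⟨1/2 + o m * (F (ech o m u) - m / 2), ?_, ?_⟩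
  · have e1 : ∀ x y, x ≤ y → ech o m x ≤ ech o m y ∨ ech o m y ≤ ech o m x := fun x y _ => le_total _ _
    unfold ech at ha hb ⊢
    rcases o_sq ho m with h | h <;> rw [h] at ha hb ⊢
    · have h1 := F.monotone (show (m : ℝ) / 2 + 1 * (a - 1/2) ≤ m / 2 + 1 * (u - 1/2) by linarith [hu.1])
      have h2 := F.monotone (show (m : ℝ) / 2 + 1 * (u - 1/2) ≤ m / 2 + 1 * (b - 1/2) by linarith [hu.2])
      rw [ha] at h1
      rw [hb] at h2
      exact ⟨by linarith, by linarith⟩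
    · have h1 := F.monotone (show (m : ℝ) / 2 + -1 * (u - 1/2) ≤ m / 2 + -1 * (a - 1/2) by linarith [hu.1])
      have h2 := F.monotone (show (m : ℝ) / 2 + -1 * (b - 1/2) ≤ m / 2 + -1 * (u - 1/2) by linarith [hu.2])
      rw [ha] at h1
      rw [hb] at h2
      exact ⟨by linarith, by linarith⟩
  · generalize F (ech o m u) = z
    unfold ech
    rcases o_sq ho m with h | h <;> rw [h] <;> ring

theorem ech_nb (_ho : ∀ m, o m = 1 ∨ o m = -1) {ε δ : ℤ} (hδ : δ = 1 ∨ δ = -1)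
    (h : o (m + ε * o m) = δ * o m) (u : ℝ) :
    ech o m u = ech o (m + ε * o m) (1/2 + (δ : ℝ) * (u - 1/2 - ε / 2)) := by
  unfold ech
  rw [h]
  push_cast
  have h2 : (δ : ℝ) * δ = 1 := by rcases hδ with rfl | rfl <;> norm_num
  linear_combination (- (o m : ℝ) * (u - 1/2 - ε / 2)) * h2

theorem good_nb (c : Ctx o G H) (h : Good o G H S) {ε δ : ℤ} (hε : ε = 1 ∨ ε = -1)
    (hδ : δ = 1 ∨ δ = -1) : Good o G H (nb o S ε δ) := by
  intro p
  have he : (ε : ℝ) = 1 ∨ (ε : ℝ) = -1 := by rcases hε with rfl | rfl <;> simp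
  have hd : (δ : ℝ) = 1 ∨ (δ : ℝ) = -1 := by rcases hδ with rfl | rfl <;> simp
  obtain ⟨κ, hκ, ν, hν, hne, sκ, hi⟩ := exists_pair c.hH hε hδ
  obtain ⟨μ, hμ, sμ, hn⟩ := D_noncomm c.hH (by rcases he with he | he <;> rw [he] <;> norm_num)
    (by rcases he with he | he <;> rw [he] <;> norm_num) sκ hne
  obtain ⟨F, hF, lF⟩ := h (p + 1) ν hν
  obtain ⟨g, hg, lg⟩ := c.lam p μ (D_le hμ).1
  set a := 1/2 + (ε : ℝ)/4 - 1/4 with ha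
  set b := 1/2 + (ε : ℝ)/4 + 1/4 with hb
  have hν0 := Fc_fix_zero (D_le hν)
  have hhalf : ν (1/2) = 1/2 := by
    have := hi (1/2 + ε / 2)
    simp only at this
    rw [show (1/2 : ℝ) + δ * (1/2 + ε / 2 - 1/2 - ε/2) = 1/2 by ring] at this
    rw [this, sκ.ioo]
    · ring
    · rintro ⟨h1, h2⟩
      rcases he with he | he <;> rw [ha, he] at h1 <;> rw [hb, he] at h2 <;> linarith
  have hfix1 : ∀ k : ℤ, ∀ u : ℝ, u = 0 ∨ u = 1/2 ∨ u = 1 → Even (k - (p + 1)) →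
      F (ech o k u) = ech o k u := by
    intro k u hu hk
    have hu1 : u ∈ Set.Icc (0 : ℝ) 1 := by
      rcases hu with rfl | rfl | rfl <;> constructor <;> norm_num
    have hu2 : ν u = u := by
      rcases hu with rfl | rfl | rfl
      · exact hν0.1
      · exact hhalf
      · exact hν0.2
    by_cases hS : k ∈ S
    · rw [(lF k hk).1 hS u hu1, hu2]
    · exact (lF k hk).2 hS u hu1
  have hfix : ∀ k : ℤ, F ((k : ℝ) / 2) = k / 2 := by
    intro k
    by_cases hk : Even (k - (p + 1))
    · have := hfix1 k (1/2) (by simp) hk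
      simpa [ech] using this
    · have hk' : Even ((k + 1) - (p + 1)) := by
        rw [Int.not_even_iff_odd] at hk
        have := hk.add_one
        rw [show k + 1 - (p + 1) = k - (p + 1) + 1 by ring]; exact this
      have := hfix1 (k + 1) (1/2 - o (k + 1) / 2) (by
        rcases o_sq c.ho (k + 1) with h | h <;> rw [h] <;> norm_num) hk'
      have e : ech o (k + 1) (1/2 - o (k + 1) / 2) = k / 2 := by
        unfold ech
        push_cast
        rcases o_sq c.ho (k + 1) with h | h <;> rw [h] <;> ring
      rwa [e] at this
  refine Q_higman c (ν := ⁅κ, μ⁆) ⟨D_le (Subgroup.commutator_mem_commutator (D_le hκ) (D_le hμ)),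
    ⁅F, g⁆, ?_, ?_⟩ hn
  · rw [commutatorElement_def]
    exact G.mul_mem (G.mul_mem (G.mul_mem hF hg) (G.inv_mem hF)) (G.inv_mem hg)
  intro m hm
  have lgm := (lg m hm).1 (Set.mem_univ _)
  have hsub : Set.Icc a b ⊆ Set.Icc 0 1 := Set.Icc_subset_Icc
    (by rcases he with he | he <;> rw [ha, he] <;> norm_num)
    (by rcases he with he | he <;> rw [hb, he] <;> norm_num)
  have lgs : LocOn o m (Set.Icc a b) μ g := fun u hu => lgm u (hsub hu)
  have pκ : Pres κ (Set.Icc a b) := sκ.pres le_rfl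
  have pμ : Pres μ (Set.Icc a b) := sμ.pres le_rfl
  have hpar : Even (m + ε * o m - (p + 1)) := by
    have : Odd (ε * o m) := by
      rcases hε with rfl | rfl <;> rcases c.ho m with h | h <;> rw [h] <;> decide
    have h2 := (hm.add_odd this).sub_odd odd_one
    rw [show m + ε * o m - (p + 1) = m - p + ε * o m - 1 by ring]; exact h2
  -- outside of the half
  have hfixm : ∀ u : ℝ, u = 0 ∨ u = 1/2 ∨ u = 1 → F (ech o m u) = ech o m u := by
    intro u hu
    have : ∃ k : ℤ, ech o m u = k / 2 := by
      unfold ech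
      rcases hu with rfl | rfl | rfl
      · exact ⟨m - o m, by push_cast; ring⟩
      · exact ⟨m, by ring⟩
      · exact ⟨m + o m, by push_cast; ring⟩
    obtain ⟨k, hk⟩ := this
    rw [hk, hfix]
  have hout : ∀ u ∈ Set.Icc (0 : ℝ) 1, u ∉ Set.Icc a b → ⁅F, g⁆ (ech o m u) = ech o m u := by
    intro u hu hu'
    set a' := 1/2 - (ε : ℝ)/4 - 1/4 with ha'
    set b' := 1/2 - (ε : ℝ)/4 + 1/4 with hb'
    have hu2 : u ∈ Set.Icc a' b' := by
      rcases he with he | he <;> rw [ha, hb, he] at hu' <;> rw [ha', hb', he]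
      · refine ⟨by linarith [hu.1], ?_⟩
        by_contra h3
        exact hu' ⟨by linarith, by linarith [hu.2]⟩
      · refine ⟨?_, by linarith [hu.2]⟩
        by_contra h3
        exact hu' ⟨by linarith [hu.1], by linarith⟩
    have fa : F (ech o m a') = ech o m a' := hfixm _ (by
      rcases he with he | he <;> rw [ha', he] <;> norm_num)
    have fb : F (ech o m b') = ech o m b' := hfixm _ (by
      rcases he with he | he <;> rw [hb', he] <;> norm_num)
    have gfix : ∀ v ∈ Set.Icc a' b', g (ech o m v) = ech o m v := by
      intro v hv
      have hv1 : v ∈ Set.Icc (0 : ℝ) 1 := by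
        rcases he with he | he <;> rw [ha', hb', he] at hv <;>
          exact ⟨by linarith [hv.1], by linarith [hv.2]⟩
      rw [lgm v hv1, sμ.ioo]
      rintro ⟨h1, h2⟩
      rcases he with he | he <;> rw [ha, he] at h1 <;> rw [hb, he] at h2 <;>
        rw [ha', hb', he] at hv <;> linarith [hv.1, hv.2]
    obtain ⟨v, hv, hFv⟩ := ech_pres c.ho (F := F⁻¹) (inv_apply_eq fa) (inv_apply_eq fb) hu2
    rw [commutatorElement_def, RelIso.mul_apply, RelIso.mul_apply, RelIso.mul_apply,
      inv_apply_eq (gfix u hu2), hFv, gfix v hv, ← hFv, RelIso.apply_inv_self]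
  have hcs : SuppIn ⁅κ, μ⁆ (Set.Icc a b) := by
    rw [commutatorElement_def]
    exact ((sκ.mul sμ).mul sκ.inv).mul sμ.inv
  have htau : ∀ u ∈ Set.Icc a b, ∀ d : ℝ, (d = 1 ∨ d = -1) →
      1/2 + d * (u - 1/2 - ε / 2) ∈ Set.Icc (0 : ℝ) 1 := by
    intro u hu d hd
    rw [ha, hb] at hu
    rcases he with he | he <;> rw [he] at hu ⊢ <;> rcases hd with rfl | rfl <;>
      exact ⟨by linarith [hu.1, hu.2], by linarith [hu.1, hu.2]⟩
  constructor
  · rintro ⟨hS, hor⟩ u hu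
    by_cases hu' : u ∈ Set.Icc a b
    · have lF' : LocOn o m (Set.Icc a b) κ F := by
        intro v hv
        rw [ech_nb c.ho hδ hor v, (lF _ hpar).1 hS _ (htau v hv _ hd), ech_nb c.ho hδ hor]
        congr 1
        exact hi v
      exact lF'.comm lgs pκ pμ u hu'
    · rw [hout u hu hu', hcs u hu']
  · intro hnot u hu
    by_cases hu' : u ∈ Set.Icc a b
    · have lF' : LocOn o m (Set.Icc a b) 1 F := by
        intro v hv
        obtain ⟨δ', hδ', hor⟩ : ∃ δ' : ℤ, (δ' = 1 ∨ δ' = -1) ∧ o (m + ε * o m) = δ' * o m := by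
          rcases c.ho m with h | h <;> rcases c.ho (m + ε * o m) with h' | h' <;> rw [h', h]
          · exact ⟨1, by simp⟩
          · exact ⟨-1, by simp⟩
          · exact ⟨-1, by simp⟩
          · exact ⟨1, by simp⟩
        have hd' : (δ' : ℝ) = 1 ∨ (δ' : ℝ) = -1 := by rcases hδ' with rfl | rfl <;> simp
        by_cases hS : m + ε * o m ∈ S
        · have hne : δ' ≠ δ := by
            rintro rfl
            exact hnot ⟨hS, hor⟩
          have hdd : (δ' : ℝ) = -δ := by
            rcases hδ with rfl | rfl <;> rcases hδ' with rfl | rfl <;> first | exact absurd rfl hne | norm_num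
          rw [ech_nb c.ho hδ' hor v, (lF _ hpar).1 hS _ (htau v hv _ hd'), RelIso.one_apply,
            ech_nb c.ho hδ' hor]
          congr 1
          have := hi (1 + ε - v)
          simp only at this
          rw [show (1/2 : ℝ) + δ * (1 + ε - v - 1/2 - ε/2) = 1/2 + δ' * (v - 1/2 - ε / 2) by
            rw [hdd]; ring] at this
          rw [this, sκ.ioo]
          · rw [hdd]; ring
          · rintro ⟨h1, h2⟩
            rw [ha, hb] at hv
            rcases he with he | he <;> rw [ha, he] at h1 <;> rw [hb, he] at h2 <;>
              rw [he] at hv <;> linarith [hv.1, hv.2]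
        · rw [ech_nb c.ho hδ' hor v, (lF _ hpar).2 hS _ (htau v hv _ hd'), RelIso.one_apply,
            RelIso.one_apply, ← ech_nb c.ho hδ' hor v]
      have := lF'.comm lgs (Pres.one _) pμ u hu'
      simpa using this
    · rw [hout u hu hu', RelIso.one_apply]

end good

/-! ### Part IV: markers -/

section markers

variable {o : ℤ → ℤ} {G H : Subgroup (ℝ ≃o ℝ)} {S : Set ℤ}

/-- Pull back. -/
def pull (o : ℤ → ℤ) (j : ℤ) (S : Set ℤ) : Set ℤ := {m | m + j * o m ∈ S}

theorem rel_or (ho : ∀ m, o m = 1 ∨ o m = -1) (m m' : ℤ) : o m' = 1 * o m ∨ o m' = -1 * o m := by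
  rcases ho m with h | h <;> rcases ho m' with h' | h' <;> rw [h, h'] <;> simp

theorem good_pull_aux (c : Ctx o G H) (n : ℕ) : ∀ S, Good o G H S →
    Good o G H (pull o n S) ∧ Good o G H (pull o (-n) S) := by
  induction n with
  | zero => intro S hS; simpa [pull] using hS
  | succ n ih =>
    intro S hS
    constructor
    · have : pull o ((n + 1 : ℕ) : ℤ) S = nb o (pull o n S) 1 1 ∪ nb o (pull o (-n) S) 1 (-1) := by
        ext m
        simp only [pull, nb, Set.mem_union, Set.mem_ofPred_eq]
        constructor
        · intro h
          rcases rel_or c.ho m (m + 1 * o m) with h1 | h1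
          · left; refine ⟨?_, h1⟩
            rw [h1]; convert h using 1; push_cast; ring
          · right; refine ⟨?_, h1⟩
            rw [h1]; convert h using 1; push_cast; ring
        · rintro (⟨h, h1⟩ | ⟨h, h1⟩)
          · rw [h1] at h; convert h using 1; push_cast; ring
          · rw [h1] at h; convert h using 1; push_cast; ring
      rw [this]
      exact good_union c (good_nb c (ih S hS).1 (by simp) (by simp))
        (good_nb c (ih S hS).2 (by simp) (by simp))
    · have : pull o (-((n + 1 : ℕ) : ℤ)) S =
          nb o (pull o (-n) S) (-1) 1 ∪ nb o (pull o n S) (-1) (-1) := by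
        ext m
        simp only [pull, nb, Set.mem_union, Set.mem_ofPred_eq]
        constructor
        · intro h
          rcases rel_or c.ho m (m + -1 * o m) with h1 | h1
          · left; refine ⟨?_, h1⟩
            rw [h1]; convert h using 1; push_cast; ring
          · right; refine ⟨?_, h1⟩
            rw [h1]; convert h using 1; push_cast; ring
        · rintro (⟨h, h1⟩ | ⟨h, h1⟩)
          · rw [h1] at h; convert h using 1; push_cast; ring
          · rw [h1] at h; convert h using 1; push_cast; ring
      rw [this]
      exact good_union c (good_nb c (ih S hS).2 (by simp) (by simp))
        (good_nb c (ih S hS).1 (by simp) (by simp))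

theorem good_pull (c : Ctx o G H) (hS : Good o G H S) (j : ℤ) : Good o G H (pull o j S) := by
  obtain ⟨n, rfl | rfl⟩ := Int.eq_nat_or_neg j
  · exact (good_pull_aux c n S hS).1
  · exact (good_pull_aux c n S hS).2

/-- Units with the same orientation as their `j`-th neighbour. -/
def Wset (o : ℤ → ℤ) (j : ℤ) : Set ℤ := {m | o (m + j * o m) = o m}

theorem good_W_aux (c : Ctx o G H) (n : ℕ) : Good o G H (Wset o n) ∧ Good o G H (Wset o (-n)) := by
  have hne : ∀ m, o m ≠ -o m := fun m => by rcases c.ho m with h | h <;> rw [h] <;> decide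
  have hor : ∀ m m', o m' ≠ o m → o m' = - o m := fun m m' h => by
    rcases rel_or c.ho m m' with h1 | h1
    · exact absurd (by simpa using h1) h
    · simpa using h1
  induction n with
  | zero =>
    have : Wset o 0 = Set.univ := by ext m; simp [Wset]
    simpa [this] using good_univ c
  | succ n ih =>
    constructor
    · have : Wset o ((n + 1 : ℕ) : ℤ) = nb o (Wset o n) 1 1 ∪ nb o (Wset o (-n))ᶜ 1 (-1) := by
        ext m
        simp only [Wset, nb, Set.mem_union, Set.mem_ofPred_eq, Set.mem_compl_iff]
        have e1 : m + 1 * o m + n * o m = m + ((n + 1 : ℕ) : ℤ) * o m := by push_cast; ring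
        have e2 : m + 1 * o m + -n * (-1 * o m) = m + ((n + 1 : ℕ) : ℤ) * o m := by push_cast; ring
        rcases rel_or c.ho m (m + 1 * o m) with h1 | h1 <;> rw [h1]
        · simp only [one_mul, neg_one_mul] at e1 ⊢
          rw [e1]
          have := hne m
          constructor
          · intro h; left; exact ⟨h, by simp⟩
          · rintro (⟨h, -⟩ | ⟨-, h⟩)
            · exact h
            · exact absurd (by simpa using h) this
        · rw [e2]
          have := hne m
          constructor
          · intro h; right; rw [h]; refine ⟨by simpa using this, rfl⟩
          · rintro (⟨-, h⟩ | ⟨h, -⟩)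
            · exact absurd (by simpa using h.symm) this
            · by_contra h'
              exact h (by simpa using hor _ _ h')
      rw [this]
      exact good_union c (good_nb c ih.1 (by simp) (by simp))
        (good_nb c (good_compl c ih.2) (by simp) (by simp))
    · have : Wset o (-((n + 1 : ℕ) : ℤ)) = nb o (Wset o (-n)) (-1) 1 ∪ nb o (Wset o n)ᶜ (-1) (-1) := by
        ext m
        simp only [Wset, nb, Set.mem_union, Set.mem_ofPred_eq, Set.mem_compl_iff]
        have e1 : m + -1 * o m + -n * o m = m + -((n + 1 : ℕ) : ℤ) * o m := by push_cast; ring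
        have e2 : m + -1 * o m + n * (-1 * o m) = m + -((n + 1 : ℕ) : ℤ) * o m := by push_cast; ring
        rcases rel_or c.ho m (m + -1 * o m) with h1 | h1 <;> rw [h1]
        · simp only [one_mul, neg_one_mul] at e1 ⊢
          rw [e1]
          have := hne m
          constructor
          · intro h; left; exact ⟨h, by simp⟩
          · rintro (⟨h, -⟩ | ⟨-, h⟩)
            · exact h
            · exact absurd (by simpa using h) this
        · rw [e2]
          have := hne m
          constructor
          · intro h; right; rw [h]; refine ⟨by simpa using this, rfl⟩
          · rintro (⟨-, h⟩ | ⟨h, -⟩)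
            · exact absurd (by simpa using h.symm) this
            · by_contra h'
              exact h (by simpa using hor _ _ h')
      rw [this]
      exact good_union c (good_nb c ih.2 (by simp) (by simp))
        (good_nb c (good_compl c ih.1) (by simp) (by simp))

theorem good_W (c : Ctx o G H) (j : ℤ) : Good o G H (Wset o j) := by
  obtain ⟨n, rfl | rfl⟩ := Int.eq_nat_or_neg j
  · exact (good_W_aux c n).1
  · exact (good_W_aux c n).2

theorem good_finset (c : Ctx o G H) (A : ℤ → Set ℤ) (hA : ∀ j, Good o G H (A j)) (s : Finset ℤ) :
    Good o G H {m | ∀ j ∈ s, m ∈ A j} := by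
  induction s using Finset.induction_on with
  | empty => simpa using good_univ c
  | insert a s ha ih =>
    have : {m | ∀ j ∈ insert a s, m ∈ A j} = A a ∩ {m | ∀ j ∈ s, m ∈ A j} := by
      ext m; simp
    rw [this]
    exact good_inter c (hA a) ih

/-- The marker sets. -/
def Mark (o : ℤ → ℤ) (n : ℕ) : Set ℤ :=
  {m | Even m ∧ ∀ j : ℤ, |j| ≤ n → (o (m + j * o m) = o m ↔ o (j * o 0) = o 0)}

theorem good_mark (c : Ctx o G H) (n : ℕ) : Good o G H (Mark o n) := by
  classical
  have : Mark o n = {m | Even m} ∩ {m | ∀ j ∈ Finset.Icc (-(n : ℤ)) n,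
      m ∈ if o (j * o 0) = o 0 then Wset o j else (Wset o j)ᶜ} := by
    ext m
    simp only [Mark, Set.mem_inter_iff, Set.mem_ofPred_eq, Finset.mem_Icc, abs_le]
    refine and_congr_right (fun _ => forall_congr' (fun j => imp_congr_right (fun _ => ?_)))
    split_ifs with h
    · simp [h, Wset]
    · simp [h, Wset]
  rw [this]
  refine good_inter c (good_even c) (good_finset c _ (fun j => ?_) _)
  split_ifs
  · exact good_W c j
  · exact good_compl c (good_W c j)

/-- Quasi-periodicity in terms of orientations. -/
structure QP (o : ℤ → ℤ) : Prop where
  ho : ∀ m, o m = 1 ∨ o m = -1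
  recur : ∀ (k : ℤ) (n : ℕ), ∃ L : ℕ, ∀ z : ℤ, ∃ s, z ≤ s ∧ s ≤ z + L ∧ Even (s - k) ∧
    ∀ i : ℤ, 0 ≤ i → i ≤ n → o (s + i) = o (k + i)
  rev : ∀ (k : ℤ) (n : ℕ), ∃ k', Even (k' - (k + n)) ∧
    ∀ i : ℤ, 0 ≤ i → i ≤ n → o (k' + i) = -o (k + n - i)

theorem mark_synd (q : QP o) (n : ℕ) : ∃ L : ℕ, ∀ z : ℤ, ∃ x ∈ Mark o n, z ≤ x ∧ x ≤ z + L := by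
  obtain ⟨L, hL⟩ := q.recur (-n) (2 * n)
  refine ⟨L, fun z => ?_⟩
  obtain ⟨s, h1, h2, h3, h4⟩ := hL (z - n)
  have key : ∀ i : ℤ, |i| ≤ n → o (s + n + i) = o i := by
    intro i hi
    rw [abs_le] at hi
    have := h4 (n + i) (by linarith) (by push_cast; linarith)
    rw [show s + (n + i) = s + n + i by ring, show -(n : ℤ) + (n + i) = i by ring] at this
    exact this
  have h0 : o (s + n) = o 0 := by simpa using key 0 (by simp)
  refine ⟨s + n, ⟨by simpa using h3, fun j hj => ?_⟩, by linarith, by linarith⟩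
  rw [h0, key]
  rw [abs_mul]
  rcases q.ho 0 with h | h <;> rw [h] <;> simpa using hj

/-- No eventual periodicity. -/
theorem not_periodic (q : QP o) (Q : ℕ) (hQ : 0 < Q) : ¬ ∀ i, o (i + 2 * Q) = o i := by
  intro hper
  have hper' : ∀ (t : ℕ) i, o (i + t * (2 * Q)) = o i := by
    intro t
    induction t with
    | zero => intro i; simp
    | succ t ih =>
      intro i
      rw [← ih i, ← hper (i + t * (2 * Q))]
      congr 1; push_cast; ring
  have hperz : ∀ (t : ℤ) i, o (i + t * (2 * Q)) = o i := by
    intro t i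
    obtain ⟨n, rfl | rfl⟩ := Int.eq_nat_or_neg t
    · exact hper' n i
    · rw [← hper' n]; congr 1; ring
  obtain ⟨k', hk, h⟩ := q.rev 0 (2 * Q)
  have hk2 : Even k' := by
    have : Even ((0 : ℤ) + ((2 * Q : ℕ) : ℤ)) := by simp
    exact (Int.even_sub.1 hk).2 this
  obtain ⟨r, rfl⟩ := hk2
  have hQ' : (Q : ℤ) ≠ 0 := by exact_mod_cast hQ.ne'
  have hQp : (0 : ℤ) < Q := by exact_mod_cast hQ
  have i0 := Int.emod_nonneg (-r) hQ'
  have i1 := Int.emod_lt_of_pos (-r) hQp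
  have i2 := Int.emod_add_mul_ediv (-r) Q
  have := h ((-r) % Q) i0 (by push_cast; linarith)
  have e : r + r + (-r) % Q = (0 + ((2 * Q : ℕ) : ℤ) - (-r) % Q) + (-((-r) / Q) - 1) * (2 * Q) := by
    push_cast
    linear_combination 2 * i2
  rw [e, hperz] at this
  rcases q.ho (0 + ((2 * Q : ℕ) : ℤ) - (-r) % Q) with h | h <;> rw [h] at this <;> norm_num at this

theorem mark_sparse (q : QP o) (L : ℕ) : ∃ n : ℕ, ∀ x ∈ Mark o n, ∀ y ∈ Mark o n, x < y →
    (L : ℤ) < y - x := by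
  by_contra hcon
  push Not at hcon
  apply not_periodic q L.factorial (Nat.factorial_pos L)
  intro i
  set P : ℤ := 2 * (L.factorial : ℤ) with hP
  obtain ⟨M, hM⟩ := q.recur i (2 * L.factorial)
  obtain ⟨x, hx, y, hy, hxy, hL⟩ := hcon (M + 2 * L.factorial + L)
  set n := M + 2 * L.factorial + L with hn
  have hodd : ∀ m, o m ≠ -o m := fun m => by rcases q.ho m with h | h <;> rw [h] <;> decide
  have same : o y = o x := by
    by_contra hne
    have hyx : o y = -o x := by
      rcases rel_or q.ho x y with h1 | h1
      · exact absurd (by simpa using h1) hne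
      · simpa using h1
    obtain ⟨d, hd⟩ : Even (y - x) := hy.1.sub hx.1
    have hj : |d * o x| ≤ n := by
      rw [abs_mul]
      have h1 : |o x| = 1 := by rcases q.ho x with h | h <;> simp [h]
      rw [h1, mul_one, abs_of_nonneg (by linarith)]
      rw [hn]; push_cast
      have : (0 : ℤ) ≤ M := by positivity
      have : (0 : ℤ) ≤ L.factorial := by positivity
      linarith
    have a1 := hx.2 _ hj
    have a2 := hy.2 _ hj
    have hsq : o x * o x = 1 := by rcases q.ho x with h | h <;> simp [h]
    have e1 : x + d * o x * o x = x + d := by rw [mul_assoc, hsq, mul_one]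
    have e2 : y + d * o x * o y = x + d := by rw [hyx]; linear_combination hd - d * hsq
    rw [e1] at a1
    rw [e2, hyx, ← a1] at a2
    rcases rel_or q.ho x (x + d) with h1 | h1
    · rw [one_mul] at h1
      exact hodd x (h1 ▸ a2.2 h1)
    · rw [neg_one_mul] at h1
      exact hodd x ((a2.1 h1).symm.trans h1)
  set d := y - x with hd
  have hd0 : 0 < d := by linarith
  have hstep : ∀ j : ℤ, |j| ≤ n → o (x + j + d) = o (x + j) := by
    intro j hj
    have hj' : |j * o x| ≤ n := by
      rw [abs_mul]; rcases q.ho x with h | h <;> rw [h] <;> simpa using hj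
    have hsq : o x * o x = 1 := by rcases q.ho x with h | h <;> simp [h]
    have a1 := hx.2 _ hj'
    have a2 := hy.2 _ hj'
    rw [same, ← a1] at a2
    rw [mul_assoc, hsq, mul_one] at a2
    rw [show x + j + d = y + j by rw [hd]; ring]
    rcases rel_or q.ho x (x + j) with h1 | h1
    · rw [one_mul] at h1
      rw [h1, a2.2 h1]
    · rcases rel_or q.ho x (y + j) with h2 | h2
      · rw [one_mul] at h2
        rw [h2, a2.1 h2]
      · rw [h1, h2]
  have hiter : ∀ (t : ℕ) (j : ℤ), 0 ≤ j → j + t * d ≤ n → o (x + j + t * d) = o (x + j) := by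
    intro t
    induction t with
    | zero => intro j _ _; simp
    | succ t ih =>
      intro j hj hjt
      push_cast at hjt ⊢
      have htd : 0 ≤ (t : ℤ) * d := by positivity
      rw [← ih j hj (by nlinarith), show x + j + ((t : ℤ) + 1) * d = x + (j + t * d) + d by ring,
        hstep _ (by rw [abs_of_nonneg (by linarith)]; nlinarith)]
      congr 1; ring
  have hdvd : ∃ t : ℕ, P = t * d := by
    obtain ⟨e, he⟩ := Int.eq_ofNat_of_zero_le hd0.le
    have h1 : e ∣ L.factorial := Nat.dvd_factorial (by omega) (by omega)
    obtain ⟨t, ht⟩ := h1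
    refine ⟨2 * t, ?_⟩
    rw [hP, ht, he]
    push_cast
    ring
  obtain ⟨t, ht⟩ := hdvd
  obtain ⟨s, hs1, hs2, -, hs4⟩ := hM x
  have b1 := hs4 0 le_rfl (by positivity)
  have b2 := hs4 P (by rw [hP]; positivity) (by rw [hP]; push_cast; exact le_rfl)
  have b3 := hiter t (s - x) (by linarith) (by
    rw [← ht, hn, hP]; push_cast
    have : (0 : ℤ) ≤ L := by positivity
    linarith)
  rw [← ht, show x + (s - x) + P = s + P by ring, show x + (s - x) = s by ring] at b3
  rw [show i + 2 * (L.factorial : ℤ) = i + P by rw [hP], ← b2, b3]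
  simpa using b1

theorem blockWord_get (ρ : ℤ → Letter) (k : ℤ) (n i : ℕ) (h : i ≤ n) :
    (blockWord ρ k n)[i]? = some (ρ (k + i)) := by
  unfold blockWord
  rw [bind_pure_comp, List.map_eq_map, List.getElem?_map, List.getElem?_map,
    List.getElem?_range (by omega)]
  rfl

theorem blockWord_length (ρ : ℤ → Letter) (k : ℤ) (n : ℕ) : (blockWord ρ k n).length = n + 1 := by
  unfold blockWord; simp

/-- The orientation function. -/
def ori (ρ : ℤ → Letter) (m : ℤ) : ℤ := if ρ m = Letter.a ∨ ρ m = Letter.b then 1 else -1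

theorem qp_ori (ρ : ℤ → Letter) (hρ : IsQuasiPeriodic ρ) : QP (ori ρ) := by
  obtain ⟨hl, h1, h2⟩ := hρ
  have par : ∀ m m', ρ m = ρ m' → Even (m - m') := by
    intro m m' h
    rw [Int.even_sub]
    constructor
    · intro he
      by_contra ho
      rcases (hl m).1 he with h3 | h3 <;>
        rcases (hl m').2 (Int.not_even_iff_odd.1 ho) with h4 | h4 <;> rw [h3, h4] at h <;> cases h
    · intro he
      by_contra ho
      rcases (hl m').1 he with h3 | h3 <;>
        rcases (hl m).2 (Int.not_even_iff_odd.1 ho) with h4 | h4 <;> rw [h3, h4] at h <;> cases h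
  refine ⟨fun m => ?_, fun k n => ?_, fun k n => ?_⟩
  · unfold ori; split_ifs <;> simp
  · obtain ⟨N, hN⟩ := h1 k n
    refine ⟨N, fun z => ?_⟩
    obtain ⟨l1, l2, hl12⟩ := hN z N (by omega)
    have key : ∀ i : ℕ, i ≤ n → ρ (z + l1.length + i) = ρ (k + i) := by
      intro i hi
      have hlen := congrArg List.length hl12
      simp only [List.length_append, blockWord_length] at hlen
      have a1 := blockWord_get ρ z N (l1.length + i) (by omega)
      rw [← hl12, List.append_assoc, List.getElem?_append_right (by omega),
        List.getElem?_append_left (by rw [blockWord_length]; omega), Nat.add_sub_cancel_left,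
        blockWord_get _ _ _ _ hi] at a1
      have := Option.some.inj a1
      rw [this]
      congr 1; push_cast; ring
    have hlen := congrArg List.length hl12
    simp only [List.length_append, blockWord_length] at hlen
    refine ⟨z + l1.length, by linarith [Int.natCast_nonneg l1.length], by
      have : (l1.length : ℤ) ≤ N := by exact_mod_cast (by omega)
      linarith, par _ _ (by simpa using key 0 (by omega)), fun i hi hin => ?_⟩
    obtain ⟨e, rfl⟩ := Int.eq_ofNat_of_zero_le hi
    unfold ori
    rw [key e (by exact_mod_cast hin)]
  · obtain ⟨k', hk'⟩ := h2 k n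
    have key : ∀ i : ℕ, i ≤ n → ρ (k' + i) = (ρ (k + n - i)).inv := by
      intro i hi
      have a1 := blockWord_get ρ k' n i hi
      rw [hk'] at a1
      unfold wordInv at a1
      rw [List.getElem?_reverse (by rw [List.length_map, blockWord_length]; omega),
        List.length_map, blockWord_length, List.getElem?_map, blockWord_get _ _ _ _ (by omega)] at a1
      have := Option.some.inj a1
      rw [← this]
      congr 2
      push_cast [show i ≤ n from hi, show n + 1 - 1 - i = n - i by omega]
      ring
    have pari : ∀ m m', ρ m = (ρ m').inv → Even (m - m') := by
      intro m m' h
      rw [Int.even_sub]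
      constructor
      · intro he
        by_contra ho
        rcases (hl m).1 he with h3 | h3 <;>
          rcases (hl m').2 (Int.not_even_iff_odd.1 ho) with h4 | h4 <;> rw [h3, h4] at h <;> cases h
      · intro he
        by_contra ho
        rcases (hl m').1 he with h3 | h3 <;>
          rcases (hl m).2 (Int.not_even_iff_odd.1 ho) with h4 | h4 <;> rw [h3, h4] at h <;> cases h
    refine ⟨k', pari _ _ (by simpa using key 0 (by omega)), fun i hi hin => ?_⟩
    obtain ⟨e, rfl⟩ := Int.eq_ofNat_of_zero_le hi
    have := key e (by exact_mod_cast hin)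
    unfold ori
    rw [this]
    cases ρ (k + n - e) <;> simp [Letter.inv]

end markers

/-! ### Part V: compression and displacement -/

section compress

variable {o : ℤ → ℤ} {G H : Subgroup (ℝ ≃o ℝ)} {S : Set ℤ}

theorem ech_abs (ho : ∀ m, o m = 1 ∨ o m = -1) (m : ℤ) (u : ℝ) :
    |ech o m u - m / 2| = |u - 1/2| := by
  unfold ech
  rw [add_sub_cancel_left, abs_mul]
  rcases o_sq ho m with h | h <;> rw [h] <;> simp

theorem exists_ech (ho : ∀ m, o m = 1 ∨ o m = -1) (m : ℤ) (z : ℝ) : ∃ u, z = ech o m u := by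
  refine ⟨1/2 + o m * (z - m / 2), ?_⟩
  unfold ech
  rcases o_sq ho m with h | h <;> rw [h] <;> ring

theorem ech_inj (ho : ∀ m, o m = 1 ∨ o m = -1) {m : ℤ} {u v : ℝ} (h : ech o m u = ech o m v) :
    u = v := by
  unfold ech at h
  rcases o_sq ho m with h' | h' <;> rw [h'] at h <;> linarith

theorem cover (ho : ∀ m, o m = 1 ∨ o m = -1) (p : ℤ) (z : ℝ) :
    ∃ m, Even (m - p) ∧ ∃ u ∈ Set.Icc (0 : ℝ) 1, z = ech o m u := by
  refine ⟨p + 2 * ⌊z - p / 2 + 1/2⌋, by simp, ?_⟩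
  obtain ⟨u, hu⟩ := exists_ech ho (p + 2 * ⌊z - p / 2 + 1/2⌋) z
  refine ⟨u, ?_, hu⟩
  have h1 := ech_abs ho (p + 2 * ⌊z - p / 2 + 1/2⌋) u
  rw [← hu] at h1
  have h2 := Int.floor_le (z - p / 2 + 1/2)
  have h3 := Int.lt_floor_add_one (z - p / 2 + 1/2)
  have h4 : |u - 1/2| ≤ 1/2 := by
    rw [← h1, abs_le]
    push_cast
    constructor <;> linarith
  rw [abs_le] at h4
  exact ⟨by linarith [h4.1], by linarith [h4.2]⟩

theorem lam_supp (c : Ctx o G H) {p : ℤ} {t f : ℝ ≃o ℝ} (hf : IsLam o p S t f) {ε : ℝ}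
    (ht : SuppIn t (Set.Icc ε (1 - ε))) {z : ℝ}
    (hz : ∀ m ∈ S, Even (m - p) → 1/2 - ε < |z - m / 2|) : f z = z := by
  obtain ⟨m, hm, u, hu, rfl⟩ := cover c.ho p z
  by_cases hS : m ∈ S
  · rw [(hf m hm).1 hS u hu, ht]
    intro hu'
    have := hz m hS hm
    rw [ech_abs c.ho, lt_abs] at this
    rcases this with h | h <;> linarith [hu'.1, hu'.2]
  · exact (hf m hm).2 hS u hu

theorem compress (c : Ctx o G H) (k : ℕ) : ∀ (Y : Set ℤ) (p : ℤ), Good o G H Y →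
    (∀ y ∈ Y, Even (y - p)) → (∀ y ∈ Y, ∀ y' ∈ Y, y ≠ y' → 2 * (k : ℤ) < |y - y'|) →
    ∀ ε > 0, ∀ γ δ : ℝ, 0 ≤ γ → γ < δ → δ ≤ 1 → ∃ h ∈ G, ∃ ε' > 0,
      (∀ z : ℝ, (∀ y ∈ Y, ((k : ℝ) + 1) / 2 - ε' < |z - y / 2|) → h z = z) ∧
      (∀ y ∈ Y, ∀ z : ℝ, |z - y / 2| ≤ ((k : ℝ) + 1) / 2 - ε → ∃ u ∈ Set.Ioo γ δ, h z = ech o y u) := by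
  induction k with
  | zero =>
    intro Y p hY hp _ ε hε γ δ hγ hγδ hδ
    set e := min ε (1/4) with he
    have e0 : 0 < e := lt_min hε (by norm_num)
    have e1 : e ≤ 1/4 := min_le_right _ _
    have e2 : e ≤ ε := min_le_left _ _
    obtain ⟨t, ht, h1, h2⟩ := D_trans c.hH (α := e) (β := 1 - e) e0 (by linarith) (by linarith)
      hγ hγδ hδ
    obtain ⟨ε', h0, hε1, hs⟩ := Fc_supp (D_le ht)
    obtain ⟨f, hf, lf⟩ := hY p t ht
    refine ⟨f, hf, ε', h0, fun z hz => lam_supp c lf hs (fun m hm _ => ?_), fun y hy z hz => ?_⟩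
    · have := hz m hm
      push_cast at this
      linarith
    · obtain ⟨u, rfl⟩ := exists_ech c.ho y z
      rw [ech_abs c.ho, abs_le] at hz
      push_cast at hz
      refine ⟨t u, ⟨lt_of_lt_of_le h1 (t.monotone (by linarith [hz.1])),
        lt_of_le_of_lt (t.monotone (by linarith [hz.2])) h2⟩, ?_⟩
      exact (lf y (hp y hy)).1 hy u ⟨by linarith [hz.1], by linarith [hz.2]⟩
  | succ k ih =>
    intro Y p hY hp hgap ε hε γ δ hγ hγδ hδ
    set e := min ε (1/4) with he
    have e0 : 0 < e := lt_min hε (by norm_num)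
    have e1 : e ≤ 1/4 := min_le_right _ _
    have e2 : e ≤ ε := min_le_left _ _
    obtain ⟨t1, ht1, a1, -⟩ := D_trans c.hH (α := e) (β := e) (γ := 1/2) (δ := 1) e0 le_rfl
      (by linarith) (by norm_num) (by norm_num) le_rfl
    obtain ⟨t2, ht2, -, a2⟩ := D_trans c.hH (α := 1 - e) (β := 1 - e) (γ := 0) (δ := 1/2)
      (by linarith) le_rfl (by linarith) le_rfl (by norm_num) (by norm_num)
    obtain ⟨ε1, p1, q1, s1⟩ := Fc_supp (D_le ht1)
    obtain ⟨ε2, p2, q2, s2⟩ := Fc_supp (D_le ht2)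
    obtain ⟨f1, hf1, l1⟩ := good_pull c hY ((k : ℤ) + 1) (p + k + 1) t1 ht1
    obtain ⟨f2, hf2, l2⟩ := good_pull c hY (-((k : ℤ) + 1)) (p + k + 1) t2 ht2
    set e' := min (t1 e - 1/2) (1/2 - t2 (1 - e)) with he'
    have e'0 : 0 < e' := lt_min (by linarith) (by linarith)
    obtain ⟨h, hh, ε3, p3, b1, b2⟩ := ih Y p hY hp (fun y hy y' hy' hne => by
      have := hgap y hy y' hy' hne
      push_cast at this
      linarith) e' e'0 γ δ hγ hγδ hδ
    refine ⟨h * (f1 * f2), G.mul_mem hh (G.mul_mem hf1 hf2), min (min ε1 ε2) (min ε3 (1/4)),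
      lt_min (lt_min p1 p2) (lt_min p3 (by norm_num)), ?_, ?_⟩
    · intro z hz
      have m1 : min (min ε1 ε2) (min ε3 (1/4)) ≤ ε1 := (min_le_left _ _).trans (min_le_left _ _)
      have m2 : min (min ε1 ε2) (min ε3 (1/4)) ≤ ε2 := (min_le_left _ _).trans (min_le_right _ _)
      have m4 : min (min ε1 ε2) (min ε3 (1/4)) ≤ 1/4 := (min_le_right _ _).trans (min_le_right _ _)
      have dist : ∀ m : ℤ, ∀ j : ℤ, (j = k + 1 ∨ j = -((k : ℤ) + 1)) → m + j * o m ∈ Y → ∀ w,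
          ((k : ℝ) + 1 + 1) / 2 - w < |z - ((m + j * o m : ℤ) : ℝ) / 2| → 1/2 - w < |z - m / 2| := by
        intro m j hj _ w hw
        have h3 : |z - ((m + j * o m : ℤ) : ℝ) / 2| ≤ |z - m / 2| + ((k : ℝ) + 1) / 2 := by
          have : z - ((m + j * o m : ℤ) : ℝ) / 2 = (z - m / 2) + -(j * o m : ℝ) / 2 := by
            push_cast; ring
          rw [this]
          refine (abs_add_le _ _).trans (add_le_add le_rfl ?_)
          rw [abs_div, abs_neg, abs_mul]
          have o1 : |(o m : ℝ)| = 1 := by rcases o_sq c.ho m with h | h <;> rw [h] <;> simp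
          have j1 : |(j : ℝ)| = k + 1 := by
            rcases hj with rfl | rfl
            · push_cast; exact abs_of_nonneg (by positivity)
            · push_cast; rw [abs_neg]; exact abs_of_nonneg (by positivity)
          rw [o1, j1]; norm_num
        linarith
      have z2 : f2 z = z := lam_supp c l2 s2 (fun m hm _ => by
        have := hz _ hm
        push_cast at this
        exact dist m _ (Or.inr rfl) hm _ (by push_cast; linarith))
      have z1 : f1 z = z := lam_supp c l1 s1 (fun m hm _ => by
        have := hz _ hm
        push_cast at this
        exact dist m _ (Or.inl rfl) hm _ (by push_cast; linarith))
      rw [RelIso.mul_apply, RelIso.mul_apply, z2, z1]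
      refine b1 z (fun y hy => ?_)
      have := hz y hy
      push_cast at this
      linarith
    · intro y hy z hz
      rw [RelIso.mul_apply]
      refine b2 y hy _ ?_
      have key : ∀ σ : ℤ, (σ = 1 ∨ σ = -1) → ∃ w, e' ≤ w ∧
          (f1 * f2) ((y : ℝ) / 2 + σ * (((k : ℝ) + 2) / 2 - e)) = y / 2 + σ * (((k : ℝ) + 1) / 2 - w) := by
        intro σ hσ
        set m := y + σ * (k + 1) with hm
        have hmpar : Even (m - (p + k + 1)) := by
          rcases hσ with rfl | rfl
          · rw [hm, show y + 1 * ((k : ℤ) + 1) - (p + k + 1) = y - p by ring]; exact hp y hy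
          · rw [hm, show y + -1 * ((k : ℤ) + 1) - (p + k + 1) = (y - p) - 2 * (k + 1) by ring]
            exact (hp y hy).sub (even_two_mul _)
        have hσ2 : σ * σ = 1 := by rcases hσ with rfl | rfl <;> rfl
        have hσ2' : (σ : ℝ) * σ = 1 := by exact_mod_cast hσ2
        have hnot : y + σ * (2 * (k + 1)) ∉ Y := by
          intro hcon
          have hne : y ≠ y + σ * (2 * (k + 1)) := by
            rcases hσ with rfl | rfl <;> omega
          have := hgap y hy _ hcon hne
          rw [show y - (y + σ * (2 * (k + 1))) = -(σ * (2 * (k + 1))) by ring, abs_neg, abs_mul] at this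
          have hs1 : |σ| = 1 := by rcases hσ with rfl | rfl <;> rfl
          rw [hs1, abs_of_nonneg (by positivity)] at this
          push_cast at this
          linarith
        have hom : o m = -σ ∨ o m = σ := by
          rcases hσ with rfl | rfl <;> rcases c.ho m with h | h <;> simp [h]
        rcases hom with hom | hom
        · have i1 : m ∈ pull o ((k : ℤ) + 1) Y := by
            change m + ((k : ℤ) + 1) * o m ∈ Y
            rw [hom, hm]; convert hy using 1; ring
          have i2 : m ∉ pull o (-((k : ℤ) + 1)) Y := by
            change m + (-((k : ℤ) + 1)) * o m ∉ Y
            rw [hom, hm]; convert hnot using 2; ring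
          have ee : (y : ℝ) / 2 + σ * (((k : ℝ) + 2) / 2 - e) = ech o m e := by
            unfold ech
            rw [hom, hm]; push_cast; ring
          refine ⟨t1 e - 1/2, min_le_left _ _, ?_⟩
          rw [RelIso.mul_apply, ee, (l2 m hmpar).2 i2 e ⟨e0.le, by linarith⟩, RelIso.one_apply,
            (l1 m hmpar).1 i1 e ⟨e0.le, by linarith⟩]
          unfold ech
          rw [hom, hm]; push_cast; ring
        · have i1 : m ∉ pull o ((k : ℤ) + 1) Y := by
            change m + ((k : ℤ) + 1) * o m ∉ Y
            rw [hom, hm]; convert hnot using 2; ring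
          have i2 : m ∈ pull o (-((k : ℤ) + 1)) Y := by
            change m + (-((k : ℤ) + 1)) * o m ∈ Y
            rw [hom, hm]; convert hy using 1; ring
          have ee : (y : ℝ) / 2 + σ * (((k : ℝ) + 2) / 2 - e) = ech o m (1 - e) := by
            unfold ech
            rw [hom, hm]; push_cast; ring
          have hr := Fc_pres (D_le ht2) (1 - e) ⟨by linarith, by linarith⟩
          refine ⟨1/2 - t2 (1 - e), min_le_right _ _, ?_⟩
          rw [RelIso.mul_apply, ee, (l2 m hmpar).1 i2 (1 - e) ⟨by linarith, by linarith⟩,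
            (l1 m hmpar).2 i1 _ hr.1, RelIso.one_apply]
          unfold ech
          rw [hom, hm]; push_cast; ring
      rw [abs_le] at hz
      push_cast at hz
      obtain ⟨w1, hw1, k1⟩ := key 1 (Or.inl rfl)
      obtain ⟨w2, hw2, k2⟩ := key (-1) (Or.inr rfl)
      have g1 := (f1 * f2).monotone (show z ≤ (y : ℝ) / 2 + (1 : ℤ) * (((k : ℝ) + 2) / 2 - e) by
        push_cast; linarith [hz.2])
      have g2 := (f1 * f2).monotone (show (y : ℝ) / 2 + (-1 : ℤ) * (((k : ℝ) + 2) / 2 - e) ≤ z by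
        push_cast; linarith [hz.1])
      rw [k1] at g1
      rw [k2] at g2
      push_cast at g1 g2
      rw [abs_le]
      constructor <;> linarith

/-- A system of balls. -/
structure BallSys (o : ℤ → ℤ) (G H : Subgroup (ℝ ≃o ℝ)) (r : ℤ → ℕ) : Prop where
  good : ∀ d, 1 ≤ d → Good o G H {m | r m = d}
  par : ∀ d, 1 ≤ d → ∃ p : ℤ, ∀ m, r m = d → Even (m - p)
  disj : ∀ m m', m ≠ m' → 1 ≤ r m → 1 ≤ r m' → (r m : ℤ) + r m' ≤ |m - m'|
  bdd : ∃ N, ∀ m, r m ≤ N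

/-- The shrunk balls. -/
def Balls (r : ℤ → ℕ) (ε : ℝ) : Set ℝ := {z | ∃ m : ℤ, 1 ≤ r m ∧ |z - m / 2| ≤ (r m : ℝ) / 2 - ε}

theorem Balls_anti (r : ℤ → ℕ) {ε ε' : ℝ} (h : ε' ≤ ε) : Balls r ε ⊆ Balls r ε' := by
  rintro z ⟨m, hm, hz⟩
  exact ⟨m, hm, by linarith⟩

theorem ball_dist {m m' : ℤ} {a b z : ℝ} (h : a + b ≤ (|m - m'| : ℤ)) (hz : |z - m / 2| ≤ a / 2) :
    b / 2 ≤ |z - m' / 2| := by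
  have h1 : |(m : ℝ) / 2 - m' / 2| ≤ |z - m / 2| + |z - m' / 2| := by
    have : (m : ℝ) / 2 - m' / 2 = -(z - m / 2) + (z - m' / 2) := by ring
    rw [this]
    refine (abs_add_le _ _).trans ?_
    rw [abs_neg]
  have h2 : |(m : ℝ) / 2 - m' / 2| = ((|m - m'| : ℤ) : ℝ) / 2 := by
    rw [← sub_div, abs_div]; push_cast; norm_num
  linarith

theorem multi_compress (c : Ctx o G H) {r : ℤ → ℕ} (hr : BallSys o G H r) {ε : ℝ} (hε : 0 < ε)
    {γ δ : ℝ} (hγ : 0 ≤ γ) (hγδ : γ < δ) (hδ : δ ≤ 1) : ∃ h ∈ G, ∃ ε' > 0, SuppIn h (Balls r ε') ∧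
      ∀ m : ℤ, 1 ≤ r m → ∀ z : ℝ, |z - m / 2| ≤ (r m : ℝ) / 2 - ε → ∃ u ∈ Set.Ioo γ δ, h z = ech o m u := by
  have main : ∀ N : ℕ, ∃ h ∈ G, ∃ ε' > 0,
      (∀ z : ℝ, (∀ m : ℤ, 1 ≤ r m → r m ≤ N → (r m : ℝ) / 2 - ε' < |z - m / 2|) → h z = z) ∧
      ∀ m : ℤ, 1 ≤ r m → r m ≤ N → ∀ z : ℝ, |z - m / 2| ≤ (r m : ℝ) / 2 - ε →
        ∃ u ∈ Set.Ioo γ δ, h z = ech o m u := by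
    intro N
    induction N with
    | zero =>
      refine ⟨1, G.one_mem, 1, one_pos, fun z _ => rfl, fun m h1 h2 => ?_⟩
      omega
    | succ N ih =>
      obtain ⟨h1, g1, ε1, p1, s1, c1⟩ := ih
      obtain ⟨p, hp⟩ := hr.par (N + 1) (by omega)
      obtain ⟨h2, g2, ε2, p2, s2, c2⟩ := compress c N {m | r m = N + 1} p (hr.good _ (by omega)) hp
        (fun y hy y' hy' hne => by
          have hy1 : r y = N + 1 := hy
          have hy2 : r y' = N + 1 := hy'
          have := hr.disj y y' hne (by omega) (by omega)
          omega) ε hε γ δ hγ hγδ hδ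
      refine ⟨h1 * h2, G.mul_mem g1 g2, min ε1 ε2, lt_min p1 p2, ?_, ?_⟩
      · intro z hz
        rw [RelIso.mul_apply, s2 z, s1 z]
        · intro m hm hm'
          linarith [hz m hm (by omega), min_le_left ε1 ε2]
        · intro y hy
          have hy1 : r y = N + 1 := hy
          have := hz y (by omega) (by omega)
          rw [hy1] at this
          push_cast at this
          linarith [min_le_right ε1 ε2]
      · intro m hm hm' z hz
        rw [RelIso.mul_apply]
        rcases Nat.lt_or_ge N (r m) with h | h
        · have hrm : r m = N + 1 := by omega
          obtain ⟨u, hu, hu'⟩ := c2 m hrm z (by rw [hrm] at hz; push_cast at hz; exact hz)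
          refine ⟨u, hu, ?_⟩
          rw [hu']
          apply s1
          intro m' h3 h4
          have hne : m ≠ m' := by rintro rfl; omega
          have h5 := hr.disj m m' hne hm h3
          have h6 : |ech o m u - m / 2| ≤ (r m : ℝ) / 2 := by
            rw [ech_abs c.ho]
            have : (1 : ℝ) ≤ r m := by exact_mod_cast hm
            rw [abs_le]
            constructor <;> linarith [hu.1, hu.2]
          have := ball_dist (b := r m') (by exact_mod_cast h5) h6
          linarith
        · rw [s2]
          · exact c1 m hm h z hz
          · intro y hy
            have hy1 : r y = N + 1 := hy
            have hne : m ≠ y := by rintro rfl; omega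
            have h5 := hr.disj m y hne hm (by omega)
            have := ball_dist (m := m) (m' := y) (a := r m) (b := r y) (z := z) (by exact_mod_cast h5) (by linarith)
            rw [hy1] at this
            push_cast at this
            linarith
  obtain ⟨N, hN⟩ := hr.bdd
  obtain ⟨h, hh, ε', p', s, cc⟩ := main N
  refine ⟨h, hh, ε', p', fun z hz => s z (fun m hm _ => ?_), fun m hm => cc m hm (hN m)⟩
  by_contra hcon
  exact hz ⟨m, hm, not_lt.mp hcon⟩

theorem displace (c : Ctx o G H) {r : ℤ → ℕ} (hr : BallSys o G H r) {ε : ℝ} (hε : 0 < ε) :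
    ∃ t ∈ G, ∃ ε' > 0, SuppIn t (Balls r ε') ∧ ∀ z ∈ Balls r ε, t z ∉ Balls r ε := by
  obtain ⟨h1, g1, ε1, p1, s1, c1⟩ := multi_compress c hr hε (γ := 1/4) (δ := 1/2) (by norm_num)
    (by norm_num) (by norm_num)
  obtain ⟨h2, g2, ε2, p2, s2, c2⟩ := multi_compress c hr hε (γ := 1/2) (δ := 3/4) (by norm_num)
    (by norm_num) (by norm_num)
  refine ⟨h2⁻¹ * h1, G.mul_mem (G.inv_mem g2) g1, min ε1 ε2, lt_min p1 p2, ?_, ?_⟩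
  · exact (s2.mono (Balls_anti r (min_le_right _ _))).inv.mul (s1.mono (Balls_anti r (min_le_left _ _)))
  · rintro z ⟨m, hm, hz⟩ ⟨m', hm', hz'⟩
    obtain ⟨u, hu, e1⟩ := c1 m hm z hz
    obtain ⟨u', hu', e2⟩ := c2 m' hm' _ hz'
    rw [RelIso.mul_apply, RelIso.apply_inv_self, e1] at e2
    by_cases hmm : m = m'
    · subst hmm
      have := ech_inj c.ho e2
      linarith [hu.2, hu'.1]
    · have h5 := hr.disj m m' hmm hm hm'
      have h6 : |ech o m u - m / 2| ≤ (1 : ℝ) / 2 := by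
        rw [ech_abs c.ho, abs_le]
        constructor <;> linarith [hu.1, hu.2]
      have h7 : (1 : ℝ) + 1 ≤ (|m - m'| : ℤ) := by
        have : (2 : ℤ) ≤ |m - m'| := by omega
        exact_mod_cast this
      have := ball_dist h7 h6
      rw [e2, ech_abs c.ho, le_abs] at this
      rcases this with h | h <;> linarith [hu'.1, hu'.2]

/-- Elements supported in the (shrunk) balls. -/
def Ksub (G : Subgroup (ℝ ≃o ℝ)) (r : ℤ → ℕ) : Subgroup ↥G where
  carrier := {f | ∃ ε > 0, SuppIn f.1 (Balls r ε)}
  mul_mem' := by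
    rintro a b ⟨ε, hε, h⟩ ⟨ε', hε', h'⟩
    exact ⟨min ε ε', lt_min hε hε', (h.mono (Balls_anti r (min_le_left _ _))).mul
      (h'.mono (Balls_anti r (min_le_right _ _)))⟩
  one_mem' := ⟨1, one_pos, SuppIn.one _⟩
  inv_mem' := by
    rintro a ⟨ε, hε, h⟩
    exact ⟨ε, hε, h.inv⟩

theorem vanish_K (c : Ctx o G H) {r : ℤ → ℕ} (hr : BallSys o G H r) (ω : ↥G → ↥G → ℝ)
    (hω : IsBounded2Cocycle ω) (hh : Hom ω) : ∀ f ∈ Ksub G r, ∀ g ∈ Ksub G r, ω f g = 0 := by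
  apply vanish_of_double hω hh (Ksub G r : Set ↥G)
  rintro f hf g hg
  obtain ⟨ε, hε, h⟩ := id hf
  obtain ⟨ε', hε', h'⟩ := id hg
  obtain ⟨t, ht, ε'', hε'', st, hd⟩ := displace c hr (lt_min hε hε')
  have sf := h.mono (Balls_anti r (min_le_left ε ε'))
  have sg := h'.mono (Balls_anti r (min_le_right ε ε'))
  have htK : (⟨t, ht⟩ : ↥G) ∈ Ksub G r := ⟨ε'', hε'', st⟩
  have comm : ∀ a b : ↥G, SuppIn a.1 (Balls r (min ε ε')) → SuppIn b.1 (Balls r (min ε ε')) →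
      Commute a (⟨t, ht⟩ * b * (⟨t, ht⟩ : ↥G)⁻¹) := by
    intro a b ha hb
    have hc : SuppIn (t * b.1 * t⁻¹) (Balls r (min ε ε'))ᶜ := hb.conj t (fun x hx => hd x hx)
    have := ha.commute hc (fun x hx hx' => hx' hx)
    exact Subtype.ext this.eq
  refine ⟨⟨t, ht⟩, comm f f sf sf, comm f g sf sg, comm g f sg sf, comm g g sg sg, ?_, ?_⟩
  · exact (Ksub G r).mul_mem hf ((Ksub G r).mul_mem ((Ksub G r).mul_mem htK hf) ((Ksub G r).inv_mem htK))
  · exact (Ksub G r).mul_mem hg ((Ksub G r).mul_mem ((Ksub G r).mul_mem htK hg) ((Ksub G r).inv_mem htK))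

end compress

/-! ### Part VI : the two ball systems -/

section ballsys

variable {o : ℤ → ℤ} {G H : Subgroup (ℝ ≃o ℝ)} {X : Set ℤ}

open Classical in
/-- Balls of constant radius around `X`. -/
noncomputable def rA (X : Set ℤ) (D : ℕ) (m : ℤ) : ℕ := if m ∈ X then D else 0

theorem good_empty (c : Ctx o G H) : Good o G H ∅ := by
  have := good_compl c (good_univ c)
  rwa [Set.compl_univ] at this

theorem ballsys_A (c : Ctx o G H) (hX : Good o G H X) (hev : ∀ x ∈ X, Even x) {D : ℕ}
    (hgap : ∀ x ∈ X, ∀ y ∈ X, x < y → 2 * (D : ℤ) ≤ y - x) : BallSys o G H (rA X D) where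
  good := by
    intro d hd
    by_cases h : d = D
    · convert hX using 1
      ext m
      simp only [Set.mem_ofPred_eq, rA]
      split_ifs with hm
      · simp [hm, h]
      · simp [hm]; omega
    · convert good_empty c using 1
      ext m
      simp only [Set.mem_ofPred_eq, rA]
      split_ifs with hm
      · simp; omega
      · simp; omega
  par := by
    intro d hd
    refine ⟨0, fun m hm => ?_⟩
    unfold rA at hm
    split_ifs at hm with h
    · simpa using hev m h
    · omega
  disj := by
    intro m m' hne h h'
    unfold rA at h h' ⊢
    split_ifs at h h' ⊢ with h1 h2 <;> try omega
    rcases lt_or_gt_of_ne hne with hl | hl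
    · have := hgap m h1 m' h2 hl
      have := neg_abs_le (m - m'); omega
    · have := hgap m' h2 m h1 hl
      have := le_abs_self (m - m'); omega
  bdd := ⟨D, fun m => by unfold rA; split_ifs <;> omega⟩

theorem mem_KA {D : ℕ} (f : ↥G) {s : ℝ} (hs : s + 1/2 ≤ (D : ℝ) / 2) (h1 : 1 ≤ D)
    (h : ∀ z : ℝ, (∀ x ∈ X, s < |z - (x : ℤ) / 2|) → f.1 z = z) : f ∈ Ksub G (rA X D) := by
  refine ⟨1/2, by norm_num, fun z hz => h z fun x hx => ?_⟩
  by_contra hcon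
  rw [not_lt] at hcon
  refine hz ⟨x, ?_, ?_⟩
  · unfold rA; rw [if_pos hx]; exact h1
  · unfold rA; rw [if_pos hx]; linarith

/-- `c ± d` are consecutive elements of `X`. -/
def Consec (X : Set ℤ) (m : ℤ) (d : ℕ) : Prop :=
  1 ≤ d ∧ m - d ∈ X ∧ m + d ∈ X ∧ ∀ i : ℤ, -(d : ℤ) < i → i < d → m + i ∉ X

theorem Consec.unique {m : ℤ} {d d' : ℕ} (h : Consec X m d) (h' : Consec X m d') : d = d' := by
  obtain ⟨_, _, a, b⟩ := h
  obtain ⟨_, _, a', b'⟩ := h'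
  rcases lt_trichotomy d d' with hl | hl | hl
  · exact absurd a (b' d (by omega) (by omega))
  · exact hl
  · exact absurd a' (b d' (by omega) (by omega))

open Classical in
/-- Balls between consecutive elements of `X`. -/
noncomputable def rB (X : Set ℤ) (m : ℤ) : ℕ := if h : ∃ d, Consec X m d then h.choose else 0

theorem rB_eq {m : ℤ} {d : ℕ} (hd : 1 ≤ d) : rB X m = d ↔ Consec X m d := by
  unfold rB
  split_ifs with h
  · constructor
    · intro e; rw [← e]; exact h.choose_spec
    · intro e; exact h.choose_spec.unique e
  · constructor
    · intro e; omega
    · intro e; exact absurd ⟨d, e⟩ h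

theorem good_consec (c : Ctx o G H) (hX : Good o G H X) {d : ℕ} (hd : 1 ≤ d) :
    Good o G H {m | Consec X m d} := by
  have h1 := good_inter c (good_pull c hX d) (good_pull c hX (-d))
  have h2 := good_finset c (fun i => (pull o i X)ᶜ) (fun i => good_compl c (good_pull c hX i))
    (Finset.Ioo (-(d : ℤ)) d)
  convert good_inter c h1 h2 using 1
  ext m
  simp only [Set.mem_ofPred_eq, Set.mem_inter_iff, pull, Set.mem_compl_iff, Finset.mem_Ioo, Consec]
  rcases c.ho m with h | h <;> rw [h]
  · simp only [mul_one]
    constructor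
    · rintro ⟨_, a, b, e⟩
      exact ⟨⟨b, a⟩, fun j hj => e j hj.1 hj.2⟩
    · rintro ⟨⟨b, a⟩, e⟩
      exact ⟨hd, a, b, fun j h1 h2 => e j ⟨h1, h2⟩⟩
  · simp only [mul_neg, mul_one, neg_neg]
    constructor
    · rintro ⟨_, a, b, e⟩
      exact ⟨⟨a, b⟩, fun j hj => e (-j) (by omega) (by omega)⟩
    · rintro ⟨⟨a, b⟩, e⟩
      refine ⟨hd, a, b, fun j h1 h2 => ?_⟩
      have := e (-j) ⟨by omega, by omega⟩
      rwa [neg_neg] at this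

theorem ballsys_B (c : Ctx o G H) (hX : Good o G H X) (hev : ∀ x ∈ X, Even x) {L : ℕ}
    (hsy : ∀ z : ℤ, ∃ x ∈ X, z ≤ x ∧ x ≤ z + L) : BallSys o G H (rB X) where
  good := by
    intro d hd
    simp only [rB_eq hd]
    exact good_consec c hX hd
  par := by
    intro d hd
    refine ⟨d, fun m hm => ?_⟩
    rw [rB_eq hd] at hm
    exact hev _ hm.2.1
  disj := by
    intro m m' hne h h'
    obtain ⟨_, a, b, e⟩ := (rB_eq h).1 rfl
    obtain ⟨_, a', b', e'⟩ := (rB_eq h').1 rfl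
    generalize rB X m = d at *
    generalize rB X m' = d' at *
    by_contra hcon
    rw [not_le, abs_lt] at hcon
    have k1 : ¬ (-(d : ℤ) < m' - d' - m ∧ m' - d' - m < d) := fun hh =>
      e _ hh.1 hh.2 (by convert a' using 1; ring)
    have k2 : ¬ (-(d : ℤ) < m' + d' - m ∧ m' + d' - m < d) := fun hh =>
      e _ hh.1 hh.2 (by convert b' using 1; ring)
    have k3 : ¬ (-(d' : ℤ) < m - d - m' ∧ m - d - m' < d') := fun hh =>
      e' _ hh.1 hh.2 (by convert a using 1; ring)
    have k4 : ¬ (-(d' : ℤ) < m + d - m' ∧ m + d - m' < d') := fun hh =>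
      e' _ hh.1 hh.2 (by convert b using 1; ring)
    omega
  bdd := by
    refine ⟨L + 1, fun m => ?_⟩
    by_contra hcon
    rw [not_le] at hcon
    obtain ⟨_, a, b, e⟩ := (rB_eq (X := X) (m := m) (by omega : 1 ≤ rB X m)).1 rfl
    obtain ⟨x, hx, h1, h2⟩ := hsy m
    exact e (x - m) (by omega) (by omega) (by convert hx using 1; ring)

theorem mem_KB (hev : ∀ x ∈ X, Even x) {L : ℕ}
    (hsy : ∀ z : ℤ, ∃ x ∈ X, z ≤ x ∧ x ≤ z + L) (f : ↥G) {ε : ℝ} (hε : 0 < ε)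
    (h : ∀ x ∈ X, ∀ z : ℝ, |z - (x : ℤ) / 2| ≤ ε → f.1 z = z) : f ∈ Ksub G (rB X) := by
  refine ⟨ε, hε, fun z hz => ?_⟩
  by_contra hf
  apply hz
  obtain ⟨lo, ⟨hlo1, hlo2⟩, hlo⟩ := Int.exists_greatest_of_bdd (P := fun x => x ∈ X ∧ x ≤ ⌊2 * z⌋)
    ⟨⌊2 * z⌋, fun x hx => hx.2⟩ (by
      obtain ⟨x, hx, h1, h2⟩ := hsy (⌊2 * z⌋ - L)
      exact ⟨x, hx, by omega⟩)
  obtain ⟨hi, ⟨hhi1, hhi2⟩, hhi⟩ := Int.exists_least_of_bdd (P := fun x => x ∈ X ∧ ⌊2 * z⌋ + 1 ≤ x)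
    ⟨⌊2 * z⌋ + 1, fun x hx => hx.2⟩ (by
      obtain ⟨x, hx, h1, h2⟩ := hsy (⌊2 * z⌋ + 1)
      exact ⟨x, hx, by omega⟩)
  obtain ⟨a, ha⟩ := hev lo hlo1
  obtain ⟨b, hb⟩ := hev hi hhi1
  have hc : Consec X (a + b) (b - a).toNat := by
    have e : (((b - a).toNat : ℕ) : ℤ) = b - a := Int.toNat_of_nonneg (by omega)
    refine ⟨by omega, ?_, ?_, ?_⟩
    · rw [e]; convert hlo1 using 1; rw [ha]; ring
    · rw [e]; convert hhi1 using 1; rw [hb]; ring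
    · rw [e]
      intro i h1 h2 hm
      by_cases hle : a + b + i ≤ ⌊2 * z⌋
      · have := hlo _ ⟨hm, hle⟩; omega
      · have := hhi _ ⟨hm, by omega⟩; omega
  have hr := (rB_eq hc.1).2 hc
  refine ⟨a + b, hr ▸ hc.1, ?_⟩
  rw [hr]
  have e : (((b - a).toNat : ℕ) : ℝ) = b - a := by
    have : (((b - a).toNat : ℕ) : ℤ) = b - a := Int.toNat_of_nonneg (by omega)
    exact_mod_cast this
  rw [e]
  have f1 : ((lo : ℤ) : ℝ) ≤ 2 * z := le_trans (by exact_mod_cast hlo2) (Int.floor_le _)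
  have f2 : 2 * z < (hi : ℤ) := lt_of_lt_of_le (Int.lt_floor_add_one _) (by exact_mod_cast hhi2)
  have g1 : ε < |z - (lo : ℤ) / 2| := by
    by_contra hcon
    exact hf (h lo hlo1 z (not_lt.1 hcon))
  have g2 : ε < |z - (hi : ℤ) / 2| := by
    by_contra hcon
    exact hf (h hi hhi1 z (not_lt.1 hcon))
  rw [abs_of_nonneg (by linarith)] at g1
  rw [abs_of_nonpos (by linarith)] at g2
  rw [ha] at g1
  rw [hb] at g2
  push_cast at g1 g2 ⊢
  rw [abs_le]
  constructor <;> linarith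

end ballsys

/-! ### Part VII : cutting elements near sparse sets -/

section cutting

variable {o : ℤ → ℤ} {G H : Subgroup (ℝ ≃o ℝ)}

/-- `f` can be cut off away from sparse good sets. -/
def Cut (o : ℤ → ℤ) (G H : Subgroup (ℝ ≃o ℝ)) (f : ℝ ≃o ℝ) : Prop :=
  ∀ r : ℕ, ∃ R : ℕ, ∀ X : Set ℤ, Good o G H X → (∀ x ∈ X, Even x) →
    (∀ x ∈ X, ∀ y ∈ X, x < y → (R : ℤ) < y - x) → ∃ a ∈ G,
      (∀ x ∈ X, ∀ z : ℝ, |z - (x : ℤ) / 2| ≤ r → a z = f z) ∧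
      (∀ z : ℝ, (∀ x ∈ X, (R : ℝ) < |z - (x : ℤ) / 2|) → a z = z)

/-- Bounded displacement. -/
def Disp (f : ℝ ≃o ℝ) : Prop := ∃ M : ℕ, ∀ z, |f z - z| ≤ M

/-- Elements which can be cut and have bounded displacement. -/
def CutSub (o : ℤ → ℤ) (G H : Subgroup (ℝ ≃o ℝ)) : Subgroup (ℝ ≃o ℝ) where
  carrier := {f | Cut o G H f ∧ Disp f}
  mul_mem' := by
    rintro f g ⟨cf, M, hM⟩ ⟨cg, M', hM'⟩
    refine ⟨fun r => ?_, M + M', fun z => ?_⟩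
    · obtain ⟨R, hR⟩ := cf (r + M')
      obtain ⟨R', hR'⟩ := cg r
      refine ⟨max R R', fun X hX hev hgap => ?_⟩
      obtain ⟨a, ha, a1, a2⟩ := hR X hX hev fun x hx y hy h =>
        lt_of_le_of_lt (by exact_mod_cast le_max_left R R') (hgap x hx y hy h)
      obtain ⟨b, hb, b1, b2⟩ := hR' X hX hev fun x hx y hy h =>
        lt_of_le_of_lt (by exact_mod_cast le_max_right R R') (hgap x hx y hy h)
      refine ⟨a * b, G.mul_mem ha hb, fun x hx z hz => ?_, fun z hz => ?_⟩
      · rw [RelIso.mul_apply, RelIso.mul_apply, b1 x hx z hz]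
        apply a1 x hx
        have := abs_add_le (g z - z) (z - (x : ℤ) / 2)
        rw [sub_add_sub_cancel] at this
        push_cast
        linarith [hM' z]
      · rw [RelIso.mul_apply, b2, a2]
        · exact fun x hx => lt_of_le_of_lt (by exact_mod_cast le_max_left R R') (hz x hx)
        · exact fun x hx => lt_of_le_of_lt (by exact_mod_cast le_max_right R R') (hz x hx)
    · rw [RelIso.mul_apply]
      have := abs_add_le (f (g z) - g z) (g z - z)
      rw [sub_add_sub_cancel] at this
      push_cast
      linarith [hM' z, hM (g z)]
  one_mem' := ⟨fun r => ⟨0, fun X _ _ _ => ⟨1, G.one_mem, fun _ _ _ _ => rfl, fun _ _ => rfl⟩⟩,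
    0, fun z => by simp⟩
  inv_mem' := by
    rintro f ⟨cf, M, hM⟩
    have hd : ∀ z, |f⁻¹ z - z| ≤ M := fun z => by
      have := hM (f⁻¹ z)
      rwa [RelIso.apply_inv_self, abs_sub_comm] at this
    refine ⟨fun r => ?_, M, hd⟩
    obtain ⟨R, hR⟩ := cf (r + M)
    refine ⟨R, fun X hX hev hgap => ?_⟩
    obtain ⟨a, ha, a1, a2⟩ := hR X hX hev hgap
    refine ⟨a⁻¹, G.inv_mem ha, fun x hx z hz => ?_, fun z hz => ?_⟩
    · apply inv_apply_eq
      rw [a1 x hx, RelIso.apply_inv_self]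
      have := abs_add_le (f⁻¹ z - z) (z - (x : ℤ) / 2)
      rw [sub_add_sub_cancel] at this
      push_cast
      linarith [hd z]
    · exact inv_apply_eq (a2 z hz)

theorem lam_disp (c : Ctx o G H) {p : ℤ} {ν f : ℝ ≃o ℝ} (hf : IsLam o p Set.univ ν f)
    (hν : Pres ν (Set.Icc 0 1)) (z : ℝ) : |f z - z| ≤ 1 := by
  obtain ⟨m, hm, u, hu, rfl⟩ := cover c.ho p z
  rw [(hf m hm).1 trivial u hu]
  have hv := (hν u hu).1
  unfold ech
  rw [abs_le]
  rcases o_sq c.ho m with h | h <;> rw [h] <;> constructor <;> linarith [hu.1, hu.2, hv.1, hv.2]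

theorem lam_uniq (c : Ctx o G H) {p : ℤ} {ν f f' : ℝ ≃o ℝ} (hf : IsLam o p Set.univ ν f)
    (hf' : IsLam o p Set.univ ν f') : f = f' := by
  ext z
  obtain ⟨m, hm, u, hu, rfl⟩ := cover c.ho p z
  rw [(hf m hm).1 trivial u hu, (hf' m hm).1 trivial u hu]

theorem cut_aux (c : Ctx o G H) {p : ℤ} {ν f : ℝ ≃o ℝ} (hfG : f ∈ G)
    (hf : IsLam o p Set.univ ν f) (hν : Pres ν (Set.Icc 0 1)) {γ δ : ℝ} (h0 : 0 ≤ γ)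
    (hγδ : γ < δ) (h1 : δ ≤ 1) (hfix : ∀ u ∈ Set.Ioo γ δ, ν u = u) (r : ℕ) (Y : Set ℤ)
    (hY : Good o G H Y) (hp : ∀ y ∈ Y, Even (y - p))
    (hgap : ∀ y ∈ Y, ∀ y' ∈ Y, y ≠ y' → 4 * (r : ℤ) + 2 < |y - y'|) :
    ∃ a ∈ G, (∀ y ∈ Y, ∀ z : ℝ, |z - (y : ℤ) / 2| ≤ r + 1/2 → a z = f z) ∧
      (∀ z : ℝ, (∀ y ∈ Y, (r : ℝ) + 2 < |z - (y : ℤ) / 2|) → a z = z) := by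
  obtain ⟨h, hhG, ε', hε', k1, k2⟩ := compress c (2 * r + 1) Y p hY hp (fun y hy y' hy' hne => by
    have := hgap y hy y' hy' hne; push_cast; linarith) (1/4) (by norm_num) γ δ h0 hγδ h1
  push_cast at k1 k2
  refine ⟨f * (h⁻¹ * f⁻¹ * h), G.mul_mem hfG (G.mul_mem (G.mul_mem (G.inv_mem hhG) (G.inv_mem hfG))
    hhG), fun y hy z hz => ?_, fun z hz => ?_⟩
  · obtain ⟨u, hu, e⟩ := k2 y hy z (by linarith)
    rw [RelIso.mul_apply, RelIso.mul_apply, RelIso.mul_apply, e]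
    have : f⁻¹ (ech o y u) = ech o y u := by
      apply inv_apply_eq
      rw [(hf y (hp y hy)).1 trivial u ⟨by linarith [hu.1], by linarith [hu.2]⟩, hfix u hu]
    rw [this, ← e, RelIso.inv_apply_self]
  · rw [RelIso.mul_apply, RelIso.mul_apply, RelIso.mul_apply, k1 z]
    · have hw := lam_disp c hf hν (f⁻¹ z)
      rw [RelIso.apply_inv_self] at hw
      have : h⁻¹ (f⁻¹ z) = f⁻¹ z := by
        apply inv_apply_eq
        apply k1
        intro y hy
        have := abs_add_le (z - f⁻¹ z) (f⁻¹ z - (y : ℤ) / 2)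
        rw [sub_add_sub_cancel] at this
        linarith [hz y hy]
      rw [this, RelIso.apply_inv_self]
    · intro y hy
      linarith [hz y hy]

theorem cut_core (c : Ctx o G H) {p : ℤ} {ν f : ℝ ≃o ℝ} (hfG : f ∈ G)
    (hf : IsLam o p Set.univ ν f) (hν : Pres ν (Set.Icc 0 1)) {γ δ : ℝ} (h0 : 0 ≤ γ)
    (hγδ : γ < δ) (h1 : δ ≤ 1) (hfix : ∀ u ∈ Set.Ioo γ δ, ν u = u) : f ∈ CutSub o G H := by
  refine ⟨fun r => ⟨4 * r + 10, fun X hX hev hgap => ?_⟩, 1, fun z => by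
    simpa using lam_disp c hf hν z⟩
  have hY : ∃ Y : Set ℤ, Good o G H Y ∧ (∀ y ∈ Y, Even (y - p)) ∧
      (∀ x ∈ X, ∃ y ∈ Y, |x - y| ≤ 1) ∧
      ∃ s : ℤ → ℤ, (∀ y ∈ Y, s y ∈ X ∧ |s y - y| ≤ 1) ∧ (∀ y ∈ Y, ∀ y' ∈ Y, s y = s y' → y = y') := by
    by_cases hpe : Even p
    · exact ⟨X, hX, fun y hy => (hev y hy).sub hpe, fun x hx => ⟨x, hx, by simp⟩, id,
        fun y hy => ⟨hy, by simp⟩, fun _ _ _ _ h => h⟩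
    · have key : ∀ y ∈ nb o X (-1) 1 ∪ nb o X 1 (-1), ∃ x ∈ X, y = x + o x := by
        rintro y (⟨h, e⟩ | ⟨h, e⟩)
        · exact ⟨_, h, by rw [e]; ring⟩
        · exact ⟨_, h, by rw [e]; ring⟩
      choose! s hs1 hs2 using key
      have ab : ∀ x, |o x| = 1 := fun x => by rcases c.ho x with h | h <;> rw [h] <;> rfl
      refine ⟨nb o X (-1) 1 ∪ nb o X 1 (-1), good_union c
        (good_nb c hX (Or.inr rfl) (Or.inl rfl)) (good_nb c hX (Or.inl rfl) (Or.inr rfl)),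
        fun y hy => ?_, fun x hx => ⟨x + o x, ?_, ?_⟩, s, fun y hy => ⟨hs1 y hy, ?_⟩, ?_⟩
      · have h1 := hev _ (hs1 y hy)
        have h2 := hs2 y hy
        rw [Int.not_even_iff_odd] at hpe
        obtain ⟨i, hi⟩ := h1
        obtain ⟨j, hj⟩ := hpe
        rw [Int.even_iff]
        rcases c.ho (s y) with h | h <;> rw [h] at h2 <;> omega
      · rcases rel_or c.ho x (x + o x) with h | h
        · left
          have e : x + o x + -1 * o (x + o x) = x := by rw [h]; ring
          refine ⟨by rw [e]; exact hx, by rw [e, h]; ring⟩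
        · right
          have e : x + o x + 1 * o (x + o x) = x := by rw [h]; ring
          refine ⟨by rw [e]; exact hx, by rw [e, h]; ring⟩
      · rw [sub_add_cancel_left, abs_neg, ab]
      · conv_lhs => rw [show s y - y = -o (s y) by linarith [hs2 y hy]]
        rw [abs_neg, ab]
      · intro y hy y' hy' h
        rw [hs2 y hy, hs2 y' hy', h]
  obtain ⟨Y, hYg, hYp, hXY, s, hs, hinj⟩ := hY
  have gX : ∀ x ∈ X, ∀ y ∈ X, x ≠ y → 4 * (r : ℤ) + 10 < |x - y| := by
    intro x hx y hy hne
    rcases lt_or_gt_of_ne hne with h | h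
    · have := hgap x hx y hy h
      push_cast at this
      have := neg_abs_le (x - y); linarith
    · have := hgap y hy x hx h
      push_cast at this
      have := le_abs_self (x - y); linarith
  obtain ⟨a, ha, a1, a2⟩ := cut_aux c hfG hf hν h0 hγδ h1 hfix r Y hYg hYp (by
    intro y hy y' hy' hne
    have h2 := gX _ (hs y hy).1 _ (hs y' hy').1 (fun h => hne (hinj y hy y' hy' h))
    have h3 := abs_le.1 (hs y hy).2
    have h4 := abs_le.1 (hs y' hy').2
    rw [lt_abs] at h2 ⊢
    omega)
  refine ⟨a, ha, fun x hx z hz => ?_, fun z hz => ?_⟩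
  · obtain ⟨y, hy, hxy⟩ := hXY x hx
    apply a1 y hy
    have h3 : |(x : ℝ) - y| ≤ 1 := by exact_mod_cast hxy
    rw [abs_le] at *
    constructor <;> linarith [h3.1, h3.2, hz.1, hz.2]
  · apply a2
    intro y hy
    have h2 := hz _ (hs y hy).1
    have h3 : |((s y : ℤ) : ℝ) - y| ≤ 1 := by exact_mod_cast (hs y hy).2
    rw [abs_le] at h3
    push_cast at h2
    rw [lt_abs] at *
    have : (0 : ℝ) ≤ r := by positivity
    rcases h2 with h2 | h2
    · left; linarith [h3.1, h3.2]
    · right; linarith [h3.1, h3.2]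

/-- Symmetric germs. -/
def Germ (ν : ℝ ≃o ℝ) (s : ℝ) : Prop :=
  ∃ ε > 0, ∀ t, 0 ≤ t → t ≤ ε → ν t = s * t ∧ ν (1 - t) = 1 - s * t

theorem Germ.mul {ν μ : ℝ ≃o ℝ} {s s' : ℝ} (h : Germ ν s) (h' : Germ μ s') (hs : 0 < s') :
    Germ (ν * μ) (s * s') := by
  obtain ⟨ε, hε, h⟩ := h
  obtain ⟨ε', hε', h'⟩ := h'
  refine ⟨min ε' (ε / s'), lt_min hε' (by positivity), fun t h0 h1 => ?_⟩
  have e1 := h1.trans (min_le_left _ _)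
  have e2 := h1.trans (min_le_right _ _)
  rw [le_div_iff₀ hs] at e2
  have := h (s' * t) (by positivity) (by linarith)
  rw [RelIso.mul_apply, RelIso.mul_apply, (h' t h0 e1).1, (h' t h0 e1).2, this.1, this.2]
  constructor <;> ring

theorem Germ.inv {ν : ℝ ≃o ℝ} {s : ℝ} (h : Germ ν s) (hs : 0 < s) : Germ ν⁻¹ s⁻¹ := by
  obtain ⟨ε, hε, h⟩ := h
  refine ⟨s * ε, by positivity, fun t h0 h1 => ?_⟩
  have e : s * (s⁻¹ * t) = t := by field_simp
  have := h (s⁻¹ * t) (by positivity) (by rw [inv_mul_le_iff₀ hs]; exact h1)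
  rw [e] at this
  exact ⟨inv_apply_eq this.1, inv_apply_eq this.2⟩

theorem germ_eta : Germ eta 2 := ⟨1/16, by norm_num, fun t h0 h1 =>
  ⟨eta_one h0 h1, by rw [eta_last (by linarith) (by linarith)]; ring⟩⟩

theorem germ_zpow (k : ℤ) : Germ (eta ^ k) (2 ^ k) := by
  induction k using Int.induction_on with
  | zero => exact ⟨1, one_pos, fun t _ _ => by simp⟩
  | succ n ih =>
    rw [zpow_add_one, zpow_add_one₀ two_ne_zero]
    exact ih.mul germ_eta two_pos
  | pred n ih =>
    rw [zpow_sub_one, zpow_sub_one₀ two_ne_zero]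
    exact ih.mul (germ_eta.inv two_pos) (by norm_num)

theorem inH_pres {ν : ℝ ≃o ℝ} (h : InH ν) : Pres ν (Set.Icc 0 1) :=
  SuppIn.pres (s := Set.Icc 0 1) h.1.1 le_rfl

theorem inH_germ {ν : ℝ ≃o ℝ} (h : InH ν) : ∃ k : ℤ, Germ ν (2 ^ k) := by
  obtain ⟨_, k, ε, hε, h1, h2⟩ := h
  refine ⟨k, ε, hε, fun t h0 ht => ⟨h1 t ⟨h0, ht⟩, ?_⟩⟩
  rw [h2 (1 - t) ⟨by linarith, by linarith⟩]; ring

theorem mem_Fc_of_germ (c : Ctx o G H) {ν : ℝ ≃o ℝ} (h : ν ∈ H) (hg : Germ ν 1) : ν ∈ Fc H := by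
  obtain ⟨ε, hε, hg⟩ := hg
  refine ⟨h, ε, hε, fun x hx => ?_⟩
  by_cases hx1 : x ∈ Set.Icc (0 : ℝ) 1
  · by_cases h2 : x ≤ ε
    · rw [(hg x hx1.1 h2).1, one_mul]
    · have h3 : 1 - x ≤ ε := by
        by_contra h3
        exact hx ⟨by linarith, by linarith⟩
      have := (hg (1 - x) (by linarith [hx1.2]) h3).2
      rw [sub_sub_cancel] at this
      linarith
  · exact ((c.hH ν).1 h).1.1 x hx1

/-- Elements of `H` whose global realisation can be cut. -/
def LS (c : Ctx o G H) (p : ℤ) : Subgroup (ℝ ≃o ℝ) where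
  carrier := {ν | ν ∈ H ∧ ∃ f ∈ G, f ∈ CutSub o G H ∧ IsLam o p Set.univ ν f}
  mul_mem' := by
    rintro ν μ ⟨h, f, hf, cf, lf⟩ ⟨h', g, hg, cg, lg⟩
    exact ⟨H.mul_mem h h', f * g, G.mul_mem hf hg, mul_mem cf cg,
      lf.mul lg (inH_pres ((c.hH _).1 h'))⟩
  one_mem' := ⟨H.one_mem, 1, G.one_mem, one_mem _, IsLam.one⟩
  inv_mem' := by
    rintro ν ⟨h, f, hf, cf, lf⟩
    exact ⟨H.inv_mem h, f⁻¹, G.inv_mem hf, inv_mem cf, lf.inv (inH_pres ((c.hH _).1 h))⟩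

theorem lam_cut (c : Ctx o G H) {p : ℤ} {ν f : ℝ ≃o ℝ} (hν : ν ∈ H)
    (hf : IsLam o p Set.univ ν f) : f ∈ CutSub o G H := by
  have he : eta ∈ H := (c.hH _).2 eta_mem
  have e1 : eta ∈ LS c p := by
    obtain ⟨g, hg, lg⟩ := c.lam p eta he
    exact ⟨he, g, hg, cut_core c hg lg (inH_pres eta_mem) (γ := 1/4) (δ := 3/4) (by norm_num)
      (by norm_num) (by norm_num) (fun u hu => eta_mid ⟨hu.1.le, hu.2.le⟩), lg⟩
  obtain ⟨k, hk⟩ := inH_germ ((c.hH _).1 hν)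
  have e2 : (eta ^ k)⁻¹ * ν ∈ Fc H := by
    apply mem_Fc_of_germ c (H.mul_mem (H.inv_mem (H.zpow_mem he k)) hν)
    have := ((germ_zpow k).inv (by positivity)).mul hk (by positivity)
    rwa [inv_mul_cancel₀ (by positivity)] at this
  have e3 : (eta ^ k)⁻¹ * ν ∈ LS c p := by
    obtain ⟨g, hg, lg⟩ := c.lam p _ e2.1
    obtain ⟨ε, hε, h2, hs⟩ := Fc_supp e2
    exact ⟨e2.1, g, hg, cut_core c hg lg (Fc_pres e2) (γ := 0) (δ := ε) le_rfl hε (by linarith)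
      (fun u hu => hs u fun h => absurd h.1 (not_le.2 hu.2)), lg⟩
  have e4 := mul_mem (zpow_mem e1 k) e3
  rw [mul_inv_cancel_left] at e4
  obtain ⟨_, g, _, hg, lg⟩ := e4
  rw [lam_uniq c hf lg]
  exact hg

end cutting

/-! ### Part VIII : conclusion -/

section conclusion

variable {o : ℤ → ℤ} {G H : Subgroup (ℝ ≃o ℝ)}

theorem lam_par {p q : ℤ} (h : Even (p - q)) {S : Set ℤ} {ν f : ℝ ≃o ℝ} (hf : IsLam o p S ν f) :
    IsLam o q S ν f := fun m hm => hf m (by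
  obtain ⟨i, hi⟩ := h
  obtain ⟨j, hj⟩ := hm
  exact ⟨j - i, by omega⟩)

theorem lam_zeta {ρ : ℤ → Letter} (hρ : IsLabelling ρ) {ν ζ : ℝ ≃o ℝ} (h : IsZeta ρ ν ζ) :
    IsLam (ori ρ) 1 Set.univ ν ζ := by
  intro m hm
  refine ⟨fun _ u hu => ?_, fun h => absurd trivial h⟩
  obtain ⟨n, rfl⟩ : ∃ n, m = 2 * n + 1 := by
    obtain ⟨n, hn⟩ := hm
    exact ⟨n, by omega⟩
  rcases (hρ (2 * n + 1)).2 ⟨n, rfl⟩ with e | e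
  · have ho : ori ρ (2 * n + 1) = 1 := by unfold ori; simp [e]
    have e1 : ∀ v, ech (ori ρ) (2 * n + 1) v = n + v := fun v => by
      unfold ech; rw [ho]; push_cast; ring
    rw [e1, e1, (h n (n + u) ⟨by linarith [hu.1], by linarith [hu.2]⟩).1 e, add_sub_cancel_left]
  · have ho : ori ρ (2 * n + 1) = -1 := by unfold ori; simp [e]
    have e1 : ∀ v, ech (ori ρ) (2 * n + 1) v = n + 1 - v := fun v => by
      unfold ech; rw [ho]; push_cast; ring
    rw [e1, e1, (h n (n + 1 - u) ⟨by linarith [hu.2], by linarith [hu.1]⟩).2 e, sub_sub_cancel]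

theorem lam_chi {ρ : ℤ → Letter} (hρ : IsLabelling ρ) {ν χ : ℝ ≃o ℝ} (h : IsChi ρ ν χ) :
    IsLam (ori ρ) 0 Set.univ ν χ := by
  intro m hm
  refine ⟨fun _ u hu => ?_, fun h => absurd trivial h⟩
  obtain ⟨n, rfl⟩ : ∃ n, m = 2 * n := by
    obtain ⟨n, hn⟩ := hm
    exact ⟨n, by omega⟩
  rcases (hρ (2 * n)).1 ⟨n, by ring⟩ with e | e
  · have ho : ori ρ (2 * n) = 1 := by unfold ori; simp [e]
    have e1 : ∀ v, ech (ori ρ) (2 * n) v = (n - 1/2) + v := fun v => by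
      unfold ech; rw [ho]; push_cast; ring
    rw [e1, e1, (h n ((n - 1/2) + u) ⟨by linarith [hu.1], by linarith [hu.2]⟩).1 e,
      add_sub_cancel_left]
  · have ho : ori ρ (2 * n) = -1 := by unfold ori; simp [e]
    have e1 : ∀ v, ech (ori ρ) (2 * n) v = (n + 1/2) - v := fun v => by
      unfold ech; rw [ho]; push_cast; ring
    rw [e1, e1, (h n ((n + 1/2) - u) ⟨by linarith [hu.2], by linarith [hu.1]⟩).2 e, sub_sub_cancel]

/-- Elements with a global realisation. -/
def LamSub (o : ℤ → ℤ) (G : Subgroup (ℝ ≃o ℝ)) (p : ℤ) : Subgroup (ℝ ≃o ℝ) where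
  carrier := {ν | Pres ν (Set.Icc 0 1) ∧ ∃ f ∈ G, IsLam o p Set.univ ν f}
  mul_mem' := by
    rintro ν μ ⟨h, f, hf, lf⟩ ⟨h', g, hg, lg⟩
    exact ⟨h.mul h', f * g, G.mul_mem hf hg, lf.mul lg h'⟩
  one_mem' := ⟨Pres.one _, 1, G.one_mem, IsLam.one⟩
  inv_mem' := by
    rintro ν ⟨h, f, hf, lf⟩
    exact ⟨h.inv, f⁻¹, G.inv_mem hf, lf.inv h⟩

theorem final (q : QP o) (c : Ctx o G H) (hC : G ≤ CutSub o G H) (ω : ↥G → ↥G → ℝ)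
    (hω : IsBounded2Cocycle ω) : IsCoboundaryOfBounded ω := by
  choose N hN using fun n : ℕ => mark_sparse q (4 * n + 4)
  choose L hL using fun n : ℕ => mark_synd q (N n)
  set X : ℕ → Set ℤ := fun n => Mark o (N n) with hX
  have ev : ∀ n, ∀ x ∈ X n, Even x := fun n x hx => hx.1
  have gd : ∀ n, Good o G H (X n) := fun n => good_mark c (N n)
  refine glue (fun n => Ksub G (rA (X n) (2 * n + 2))) (fun n => Ksub G (rB (X n))) ?_ ?_ ?_ ω hω
  · intro ω hω hh n
    refine vanish_K c (ballsys_A c (gd n) (ev n) fun x hx y hy hxy => ?_) ω hω hh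
    have := hN n x hx y hy hxy
    push_cast at this ⊢
    linarith
  · intro ω hω hh n
    exact vanish_K c (ballsys_B c (gd n) (ev n) (hL n)) ω hω hh
  · intro f g
    obtain ⟨cf, M, hM⟩ := hC f.2
    obtain ⟨cg, -⟩ := hC g.2
    obtain ⟨R, hR⟩ := cf 1
    obtain ⟨R', hR'⟩ := cg 1
    refine ⟨R + R' + M, fun n hn => ?_⟩
    obtain ⟨a, ha, a1, a2⟩ := hR (X n) (gd n) (ev n) fun x hx y hy h => by
      have := hN n x hx y hy h; push_cast at this; omega
    obtain ⟨b, hb, b1, b2⟩ := hR' (X n) (gd n) (ev n) fun x hx y hy h => by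
      have := hN n x hx y hy h; push_cast at this; omega
    have hn' : (R : ℝ) + R' + M ≤ n := by exact_mod_cast hn
    have p1 : (0 : ℝ) ≤ R := by positivity
    have p2 : (0 : ℝ) ≤ R' := by positivity
    have p3 : (0 : ℝ) ≤ M := by positivity
    have hD : (n : ℝ) + 1/2 ≤ ((2 * n + 2 : ℕ) : ℝ) / 2 := by push_cast; linarith
    set a' : ↥G := ⟨a, ha⟩ with ha'
    set b' : ↥G := ⟨b, hb⟩ with hb'
    refine ⟨a', a'⁻¹ * f, b', b'⁻¹ * g, ?_, ?_, ?_, ?_, by group, by group, ?_⟩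
    · exact mem_KA a' hD (by omega) fun z hz => a2 z fun x hx => by linarith [hz x hx]
    · refine mem_KB (ev n) (hL n) _ one_pos fun x hx z hz => ?_
      change (a⁻¹ * f.1) z = z
      exact inv_apply_eq (a1 x hx z (by simpa using hz))
    · exact mem_KA b' hD (by omega) fun z hz => b2 z fun x hx => by linarith [hz x hx]
    · refine mem_KB (ev n) (hL n) _ one_pos fun x hx z hz => ?_
      change (b⁻¹ * g.1) z = z
      exact inv_apply_eq (b1 x hx z (by simpa using hz))
    · refine mem_KA _ hD (by omega) fun z hz => ?_
      change (a⁻¹ * f.1 * b * (a⁻¹ * f.1)⁻¹) z = z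
      have e1 : a z = z := a2 z fun x hx => by linarith [hz x hx]
      have e2 : (a⁻¹ * f.1)⁻¹ z = f.1⁻¹ z := by
        rw [mul_inv_rev, inv_inv, RelIso.mul_apply, e1]
      have hw := hM (f.1⁻¹ z)
      rw [RelIso.apply_inv_self] at hw
      have e3 : b (f.1⁻¹ z) = f.1⁻¹ z := by
        apply b2
        intro x hx
        have := abs_add_le (z - f.1⁻¹ z) (f.1⁻¹ z - (x : ℤ) / 2)
        rw [sub_add_sub_cancel] at this
        linarith [hz x hx]
      rw [RelIso.mul_apply, e2, RelIso.mul_apply, e3, RelIso.mul_apply, RelIso.apply_inv_self]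
      exact inv_apply_eq e1

end conclusion

end VSBC

/-- For a quasi-periodic labelling `ρ`, the group `G_ρ` has vanishing
second bounded cohomology with trivial real coefficients: every bounded 2-cocycle on
`G_ρ` is the coboundary of a bounded function. -/
theorem vanishing_second_bounded_cohomology_real
    (ρ : ℤ → Letter) (hρ : IsQuasiPeriodic ρ)
    (H : Subgroup (ℝ ≃o ℝ)) (hH : ∀ f : ℝ ≃o ℝ, f ∈ H ↔ InH f)
    (ν₁ ν₂ ν₃ : ℝ ≃o ℝ) (hgen : Subgroup.closure {ν₁, ν₂, ν₃} = H)
    (ζ₁ ζ₂ ζ₃ χ₁ χ₂ χ₃ : ℝ ≃o ℝ)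
    (hζ₁ : IsZeta ρ ν₁ ζ₁) (hζ₂ : IsZeta ρ ν₂ ζ₂) (hζ₃ : IsZeta ρ ν₃ ζ₃)
    (hχ₁ : IsChi ρ ν₁ χ₁) (hχ₂ : IsChi ρ ν₂ χ₂) (hχ₃ : IsChi ρ ν₃ χ₃)
    (G : Subgroup (ℝ ≃o ℝ))
    (hG : G = Subgroup.closure {ζ₁, ζ₂, ζ₃, χ₁, χ₂, χ₃})
    (ω : ↥G → ↥G → ℝ) (hω : IsBounded2Cocycle ω) :
    IsCoboundaryOfBounded ω := by
  obtain ⟨hm1, hm2, hm3⟩ : ν₁ ∈ H ∧ ν₂ ∈ H ∧ ν₃ ∈ H := by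
    rw [← hgen]
    refine ⟨Subgroup.subset_closure ?_, Subgroup.subset_closure ?_, Subgroup.subset_closure ?_⟩ <;>
      simp
  have hGs : ({ζ₁, ζ₂, ζ₃, χ₁, χ₂, χ₃} : Set (ℝ ≃o ℝ)) ⊆ G := by
    rw [hG]; exact Subgroup.subset_closure
  have q := VSBC.qp_ori ρ hρ
  have hl : ∀ p : ℤ, ∀ ν ∈ H, ∃ f ∈ G, VSBC.IsLam (VSBC.ori ρ) p Set.univ ν f := by
    intro p ν hν
    have hle : H ≤ VSBC.LamSub (VSBC.ori ρ) G p := by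
      rw [← hgen, Subgroup.closure_le]
      have pr : ∀ μ ∈ H, VSBC.Pres μ (Set.Icc 0 1) := fun μ hμ => VSBC.inH_pres ((hH μ).1 hμ)
      rcases Int.even_or_odd p with hp | hp
      · have hp' : Even (0 - p) := by simpa using hp
        rintro μ (rfl | rfl | rfl)
        · exact ⟨pr _ hm1, χ₁, hGs (by simp), VSBC.lam_par hp' (VSBC.lam_chi hρ.1 hχ₁)⟩
        · exact ⟨pr _ hm2, χ₂, hGs (by simp), VSBC.lam_par hp' (VSBC.lam_chi hρ.1 hχ₂)⟩
        · exact ⟨pr _ hm3, χ₃, hGs (by simp), VSBC.lam_par hp' (VSBC.lam_chi hρ.1 hχ₃)⟩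
      · have hp' : Even (1 - p) := odd_one.sub_odd hp
        rintro μ (rfl | rfl | rfl)
        · exact ⟨pr _ hm1, ζ₁, hGs (by simp), VSBC.lam_par hp' (VSBC.lam_zeta hρ.1 hζ₁)⟩
        · exact ⟨pr _ hm2, ζ₂, hGs (by simp), VSBC.lam_par hp' (VSBC.lam_zeta hρ.1 hζ₂)⟩
        · exact ⟨pr _ hm3, ζ₃, hGs (by simp), VSBC.lam_par hp' (VSBC.lam_zeta hρ.1 hζ₃)⟩
    exact (hle hν).2
  have c : VSBC.Ctx (VSBC.ori ρ) G H := ⟨hH, q.ho, hl⟩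
  refine VSBC.final q c ?_ ω hω
  have hle : Subgroup.closure {ζ₁, ζ₂, ζ₃, χ₁, χ₂, χ₃} ≤ VSBC.CutSub (VSBC.ori ρ) G H := by
    rw [Subgroup.closure_le]
    rintro μ (rfl | rfl | rfl | rfl | rfl | rfl)
    · exact VSBC.lam_cut c hm1 (VSBC.lam_zeta hρ.1 hζ₁)
    · exact VSBC.lam_cut c hm2 (VSBC.lam_zeta hρ.1 hζ₂)
    · exact VSBC.lam_cut c hm3 (VSBC.lam_zeta hρ.1 hζ₃)
    · exact VSBC.lam_cut c hm1 (VSBC.lam_chi hρ.1 hχ₁)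
    · exact VSBC.lam_cut c hm2 (VSBC.lam_chi hρ.1 hχ₂)
    · exact VSBC.lam_cut c hm3 (VSBC.lam_chi hρ.1 hχ₃)
  rw [← hG] at hle
  exact hle
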